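/- There are only finitely many unit-generated real quadratic orders having class number one. Equivalently, the set of integers n ≥ 3 with h_{n²−4} = 1, together with the set of integers n ≥ 1 with h_{n²+4} = 1, is finite. -/

import Mathlib

noncomputable section

/-- A complex square root of an integer `d`. -/
def sqrtD (d : ℤ) : ℂ :=
  if 0 ≤ d then ((Real.sqrt d : ℝ) : ℂ) else Complex.I * ((Real.sqrt (-d) : ℝ) : ℂ)

/-- The element `(Δ + √Δ)/2` generating the quadratic order of discriminant `Δ`. -/
def omegaD (d : ℤ) : ℂ := ((d : ℂ) + sqrtD d) / 2

/-- The quadratic order `O_Δ = ℤ[(Δ + √Δ)/2]` of discriminant `Δ`, as a subring of `ℂ`. -/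
def QOrder (d : ℤ) : Subring ℂ := Subring.closure {omegaD d}

/-- The class number `h_Δ`: the order of the (wide) class group of `O_Δ`,
the group of invertible fractional ideals modulo principal fractional ideals. -/
def classNumber (d : ℤ) : ℕ := Nat.card (ClassGroup (QOrder d))

/-! Let `Δ = n² - 4e` with `e = ±1`, and let `ω` be the unit of trace `n` and norm `e`. If
`h_Δ = 1`, every ideal norm prime to `Δ` is the absolute norm of an element, and multiplying by
powers of `ω` moves that element into a fundamental domain where its norm is a square or at least
about `n |x y|`; so up to a fixed power of `n` the nonsquare norms are sparse.

The hyperbola method approximates products of `L`-values by truncated sums over norms. Comparing the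
partial sums for `(1 - 2^{1-β}) ζ(β) L(β, χ_Δ)` at `X` and `X / 2`, sparsity forces
`L(β₀, χ_Δ) < 0` at a fixed `β₀ < 1` for large `n`, so `L(s, χ_Δ)` has a real zero in `[β₀, 2]`.
Fix one such discriminant `d₁` with zero `β`. For a much larger discriminant `d` of the same kind,
`∑ χ_{d₁}(m) r_d(m) m^{-β}`, where `r_d(m)` counts ideals of norm `m`, is close to
`L(β, χ_{d₁} χ_d²) L(β, χ_{d₁} χ_d) = 0`, whereas squares contribute at least `1` and the other
norms almost nothing: a contradiction (the Deuring–Heilbronn phenomenon). -/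

open QuadraticAlgebra
open scoped nonZeroDivisors

section ClassNumberOne

theorem exists_eq_span_singleton_of_mul_eq_span_singleton {R : Type*} [CommRing R] [IsDomain R]
    [Subsingleton (ClassGroup R)] {I J : Ideal R} {a : R} (ha : a ≠ 0)
    (h : I * J = Ideal.span {a}) : ∃ x : R, I = Ideal.span {x} := by
  have ha' : algebraMap R (FractionRing R) a ≠ 0 := by simpa using ha
  have hI : (I : FractionalIdeal R⁰ (FractionRing R)) *
      ((J : FractionalIdeal R⁰ (FractionRing R)) *
        FractionalIdeal.spanSingleton R⁰ (algebraMap R (FractionRing R) a)⁻¹) = 1 := by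
    rw [← mul_assoc, ← FractionalIdeal.coeIdeal_mul, h, FractionalIdeal.coeIdeal_span_singleton,
      FractionalIdeal.spanSingleton_mul_spanSingleton, mul_inv_cancel₀ ha',
      FractionalIdeal.spanSingleton_one]
  obtain ⟨x, -, hx⟩ := (ClassGroup.mk_eq_one_of_coe_ideal (I := Units.mkOfMulEqOne _ _ hI)
    (I' := I) (by simp)).1 (Subsingleton.elim _ _)
  exact ⟨x, hx⟩

theorem sqrtD_sq (d : ℤ) : sqrtD d ^ 2 = d := by
  unfold sqrtD
  split_ifs with h
  · rw [← Complex.ofReal_pow, Real.sq_sqrt (by exact_mod_cast h), Complex.ofReal_intCast]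
  · rw [mul_pow, Complex.I_sq, ← Complex.ofReal_pow,
      Real.sq_sqrt (by rw [neg_nonneg]; exact_mod_cast (not_le.1 h).le)]
    push_cast
    ring

/-- The embedding of `ℤ[ω]`, `ω² = a + b ω`, into `ℂ` that sends `ω` to `(b + √(b² + 4a)) / 2`. -/
def quadraticEmbedding (a b : ℤ) : QuadraticAlgebra ℤ a b →ₐ[ℤ] ℂ :=
  QuadraticAlgebra.lift ⟨(b + sqrtD (b ^ 2 + 4 * a)) / 2, by
    have h := sqrtD_sq (b ^ 2 + 4 * a)
    push_cast at h
    simp only [zsmul_eq_mul]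
    linear_combination h / 4⟩

theorem quadraticEmbedding_apply (a b : ℤ) (z : QuadraticAlgebra ℤ a b) :
    quadraticEmbedding a b z = z.re + z.im * ((b + sqrtD (b ^ 2 + 4 * a)) / 2) := by
  simp [quadraticEmbedding, QuadraticAlgebra.lift]

theorem quadraticEmbedding_injective {a b : ℤ} (h : ¬ IsSquare (b ^ 2 + 4 * a)) :
    Function.Injective (quadraticEmbedding a b) := by
  refine (injective_iff_map_eq_zero _).2 fun z hz ↦ ?_
  have hsq : (2 * z.re + b * z.im) ^ 2 = z.im ^ 2 * (b ^ 2 + 4 * a) := by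
    rw [quadraticEmbedding_apply] at hz
    have hd := sqrtD_sq (b ^ 2 + 4 * a)
    set s := sqrtD (b ^ 2 + 4 * a)
    have : ((2 * z.re + b * z.im : ℤ) : ℂ) = -(z.im * s) := by
      push_cast
      linear_combination 2 * hz
    have : ((2 * z.re + b * z.im : ℤ) : ℂ) ^ 2 = (z.im : ℂ) ^ 2 * (b ^ 2 + 4 * a : ℤ) := by
      rw [this, ← hd]
      ring
    exact_mod_cast this
  have him : z.im = 0 := by
    by_contra him
    obtain ⟨r, hr⟩ : z.im ∣ 2 * z.re + b * z.im :=
      (Int.pow_dvd_pow_iff two_ne_zero).1 ⟨_, hsq⟩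
    refine h ⟨r, mul_left_cancel₀ (pow_ne_zero 2 him) ?_⟩
    rw [← hsq, hr]
    ring
  have hre : z.re = 0 := by
    rw [him] at hsq
    simpa using hsq
  exact QuadraticAlgebra.ext hre him

theorem range_quadraticEmbedding (a b : ℤ) :
    (quadraticEmbedding a b : QuadraticAlgebra ℤ a b →+* ℂ).range = QOrder (b ^ 2 + 4 * a) := by
  obtain ⟨t, ht⟩ : ∃ t : ℤ, b ^ 2 + 4 * a = b + 2 * t := by
    obtain ⟨t, ht⟩ := (Int.even_mul_pred_self b).two_dvd
    exact ⟨t + 2 * a, by linear_combination ht⟩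
  have homega : omegaD (b ^ 2 + 4 * a) = (b + sqrtD (b ^ 2 + 4 * a)) / 2 + t := by
    have : ((b ^ 2 + 4 * a : ℤ) : ℂ) = b + 2 * t := by exact_mod_cast ht
    rw [omegaD, this]
    ring
  have hmem : omegaD (b ^ 2 + 4 * a) ∈ QOrder (b ^ 2 + 4 * a) :=
    Subring.subset_closure (Set.mem_singleton _)
  apply le_antisymm
  · rintro _ ⟨z, rfl⟩
    rw [RingHom.coe_coe, quadraticEmbedding_apply, ← add_sub_cancel_right (_ / 2) (t : ℂ),
      ← homega]
    exact add_mem (intCast_mem _ _)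
      (mul_mem (intCast_mem _ _) (sub_mem hmem (intCast_mem _ _)))
  · refine Subring.closure_le.2 (Set.singleton_subset_iff.2 ⟨⟨t, 1⟩, ?_⟩)
    rw [RingHom.coe_coe, quadraticEmbedding_apply, homega]
    push_cast
    ring

/-- `ℤ[ω]` with `ω² = a + b ω` is the quadratic order of discriminant `b² + 4a`. -/
def quadraticAlgebraEquivQOrder {a b : ℤ} (h : ¬ IsSquare (b ^ 2 + 4 * a)) :
    QuadraticAlgebra ℤ a b ≃+* QOrder (b ^ 2 + 4 * a) :=
  (RingEquiv.ofLeftInverse (f := (quadraticEmbedding a b : QuadraticAlgebra ℤ a b →+* ℂ))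
    (Function.leftInverse_invFun (quadraticEmbedding_injective h))).trans
    (RingEquiv.subringCongr (range_quadraticEmbedding a b))

theorem isDomain_quadraticAlgebra {a b : ℤ} (h : ¬ IsSquare (b ^ 2 + 4 * a)) :
    IsDomain (QuadraticAlgebra ℤ a b) :=
  (quadraticEmbedding_injective h).isDomain (quadraticEmbedding a b)

theorem subsingleton_classGroup_of_classNumber_eq_one {a b : ℤ} [IsDomain (QuadraticAlgebra ℤ a b)]
    (h : ¬ IsSquare (b ^ 2 + 4 * a)) (h1 : classNumber (b ^ 2 + 4 * a) = 1) :
    Subsingleton (ClassGroup (QuadraticAlgebra ℤ a b)) :=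
  have := (Nat.card_eq_one_iff_unique.1 h1).1
  (ClassGroup.mulEquiv (quadraticAlgebraEquivQOrder h)).toEquiv.subsingleton

variable {a b : ℤ}

theorem span_pair_mul_span_pair_star {A C u v w : ℤ} {z : QuadraticAlgebra ℤ a b}
    (hAC : A * C = z.norm) (huvw : u * A + v * z.trace + w * C = 1) :
    Ideal.span {(A : QuadraticAlgebra ℤ a b), z} * Ideal.span {↑A, star z} =
      Ideal.span {(A : QuadraticAlgebra ℤ a b)} := by
  have hnorm : z * star z = A * C := by
    rw [← algebraMap_norm_eq_mul_star, ← hAC, eq_intCast, Int.cast_mul]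
  have htrace : (z.trace : QuadraticAlgebra ℤ a b) = z + star z := by
    rw [← algebraMap_trace_eq_add_star, eq_intCast]
  rw [Ideal.span_pair_mul_span_pair]
  apply le_antisymm
  · refine Ideal.span_le.2 ?_
    rintro x (rfl | rfl | rfl | rfl) <;> rw [SetLike.mem_coe, Ideal.mem_span_singleton]
    exacts [dvd_mul_right _ _, dvd_mul_right _ _, dvd_mul_left _ _, ⟨C, hnorm⟩]
  · rw [Ideal.span_singleton_le_iff_mem]
    set S : Set (QuadraticAlgebra ℤ a b) := 
      {A * (A : QuadraticAlgebra ℤ a b), A * star z, z * A, z * star z} with hS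
    have hcomb : (A : QuadraticAlgebra ℤ a b) =
        u * (A * A) + v * (A * star z) + v * (z * A) + w * (z * star z) := by
      have hbezout : (u * A + v * z.trace + w * C : QuadraticAlgebra ℤ a b) = 1 := by
        exact_mod_cast congrArg (Int.cast : ℤ → QuadraticAlgebra ℤ a b) huvw
      rw [hnorm]
      linear_combination (-A : QuadraticAlgebra ℤ a b) * hbezout + A * v * htrace
    have hmem : ∀ x ∈ S, ∀ r : ℤ, (r : QuadraticAlgebra ℤ a b) * x ∈ Ideal.span S :=
      fun x hx r ↦ Ideal.mul_mem_left _ _ (Ideal.subset_span hx)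
    rw [hcomb]
    exact add_mem (add_mem (add_mem (hmem _ (by simp [hS]) u) (hmem _ (by simp [hS]) v))
      (hmem _ (by simp [hS]) v)) (hmem _ (by simp [hS]) w)

theorem exists_isCoprime_abs_norm_eq [IsDomain (QuadraticAlgebra ℤ a b)]
    [Subsingleton (ClassGroup (QuadraticAlgebra ℤ a b))] {A C k u v w : ℤ} (hA : A ≠ 0)
    (hAC : A * C = k ^ 2 + b * k - a) (huvw : u * A + v * (2 * k + b) + w * C = 1) :
    ∃ z : QuadraticAlgebra ℤ a b, IsCoprime z.re z.im ∧ |z.norm| = |A| := by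
  have htrace : u * A + v * (⟨k, 1⟩ : QuadraticAlgebra ℤ a b).trace + w * C = 1 := by
    rw [trace_def]
    linear_combination huvw
  have hmul := span_pair_mul_span_pair_star (hAC.trans (by rw [norm_def]; ring)) htrace
  obtain ⟨z, hz⟩ :=
    exists_eq_span_singleton_of_mul_eq_span_singleton (Int.cast_ne_zero.2 hA) hmul
  refine ⟨z, ?_, ?_⟩
  · have hdvd : z ∣ ⟨k, 1⟩ := Ideal.mem_span_singleton.1 (hz ▸ Ideal.subset_span (by simp))
    obtain ⟨y, hy⟩ := hdvd
    have him : 1 = z.re * y.im + z.im * y.re + b * z.im * y.im := congrArg im hy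
    exact ⟨y.im, y.re + b * y.im, by linarith⟩
  · have hstar : Ideal.span {(A : QuadraticAlgebra ℤ a b), star ⟨k, 1⟩} = Ideal.span {star z} := by
      simpa [Ideal.map_span, Set.image_pair, starRingEnd_apply, -star_mk] using
        congrArg (Ideal.map (starRingEnd (QuadraticAlgebra ℤ a b))) hz
    rw [hz, hstar, Ideal.span_singleton_mul_span_singleton, ← algebraMap_norm_eq_mul_star,
      ← eq_intCast (algebraMap ℤ (QuadraticAlgebra ℤ a b)), Ideal.span_singleton_eq_span_singleton,
      ← dvd_dvd_iff_associated, algebraMap_dvd_iff_dvd, algebraMap_dvd_iff_dvd,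
      dvd_dvd_iff_associated, Int.associated_iff_natAbs] at hmul
    rw [Int.abs_eq_natAbs, Int.abs_eq_natAbs, hmul]

end ClassNumberOne

section UnitGenerated

/-- The unit-generated quadratic order of discriminant `n² - 4e`, where `e = ±1`: it is `ℤ[ω]` for
a unit `ω` of trace `n` and norm `e`. -/
abbrev UnitOrder (n : ℕ) (e : ℤˣ) : Type := QuadraticAlgebra ℤ (-(e : ℤ)) n

/-- `m` is, up to sign, the value of the norm form `x² + n x y + e y²` at a point `(x, y)` with
nonzero coordinates satisfying `(n - 2) |x y| ≤ 2 m`. Such a point is given by `|x| = a`, `|y| = b`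
and the sign `σ` of `x y`. -/
def IsBalanced (n : ℕ) (e : ℤˣ) (m : ℕ) : Prop :=
  ∃ (σ : ℤˣ) (a b : ℕ), 0 < a ∧ 0 < b ∧ |(a : ℤ) ^ 2 + σ * n * a * b + e * b ^ 2| = m ∧
    ((n : ℤ) - 2) * (a * b) ≤ 2 * m

variable {n : ℕ} {e : ℤˣ}

theorem IsBalanced.le {m : ℕ} (h : IsBalanced n e m) : n ≤ 2 * m + 2 := by
  obtain ⟨σ, a, b, ha, hb, -, h⟩ := h
  zify at ha hb ⊢
  rcases le_total (n : ℤ) 2 with hn | hn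
  · lia
  · nlinarith [mul_pos ha hb]

theorem sub_two_mul_le_two_mul_abs {n a b : ℤ} {σ e : ℤˣ} (hn : 0 < n) (ha : 0 < a) (hb : 0 < b)
    (h₁ : a ≤ |a + σ * n * b|) (h₂ : b ≤ |b + σ * e * n * a|) :
    (n - 2) * (a * b) ≤ 2 * |a ^ 2 + σ * n * a * b + e * b ^ 2| := by
  have hna := mul_pos hn ha
  have hnb := mul_pos hn hb
  have hab := mul_pos ha hb
  rcases Int.units_eq_one_or σ with rfl | rfl <;> rcases Int.units_eq_one_or e with rfl | rfl <;>
    norm_num at h₁ h₂ ⊢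
  · nlinarith [le_abs_self (a ^ 2 + n * a * b + b ^ 2)]
  · have : 2 * b ≤ n * a := by rcases le_abs.1 h₂ with h | h <;> linarith
    nlinarith [le_abs_self (a ^ 2 + n * a * b + -b ^ 2)]
  · have h₁' : 2 * a ≤ n * b := by rcases le_abs.1 h₁ with h | h <;> linarith
    have h₂' : 2 * b ≤ n * a := by rcases le_abs.1 h₂ with h | h <;> linarith
    rcases le_total a b with h | h <;>
      nlinarith [neg_abs_le (a ^ 2 + -(n * a * b) + b ^ 2)]
  · have : 2 * a ≤ n * b := by rcases le_abs.1 h₁ with h | h <;> linarith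
    nlinarith [neg_abs_le (a ^ 2 + -(n * a * b) + -b ^ 2)]

theorem exists_units_mul_natAbs_eq (x : ℤ) : ∃ u : ℤˣ, x = u * x.natAbs := by
  rcases Int.natAbs_eq x with h | h
  exacts [⟨1, by simpa using h⟩, ⟨-1, by simpa using h⟩]

theorem isBalanced_of_abs_le_abs {x y : ℤ} (hn : 0 < n) (hx : x ≠ 0) (hy : y ≠ 0)
    (h₁ : |x| ≤ |x + n * y|) (h₂ : |y| ≤ |y + n * e * x|) :
    IsBalanced n e (x ^ 2 + n * x * y + e * y ^ 2).natAbs := by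
  obtain ⟨u, hu⟩ := exists_units_mul_natAbs_eq x
  obtain ⟨v, hv⟩ := exists_units_mul_natAbs_eq y
  have ha := Int.natAbs_pos.2 hx
  have hb := Int.natAbs_pos.2 hy
  rw [Int.abs_eq_natAbs] at h₁ h₂
  set a := x.natAbs
  set b := y.natAbs
  have hu' : (u : ℤ) ^ 2 = 1 := Int.isUnit_sq u.isUnit
  have hv' : (v : ℤ) ^ 2 = 1 := Int.isUnit_sq v.isUnit
  have h₁' : x + n * y = u * (a + (u * v : ℤˣ) * n * b) := by
    rw [hu, hv]
    push_cast
    linear_combination -(n * v * b : ℤ) * hu'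
  have h₂' : y + n * e * x = v * (b + (u * v : ℤˣ) * e * n * a) := by
    rw [hu, hv]
    push_cast
    linear_combination -(n * e * u * a : ℤ) * hv'
  have hform : x ^ 2 + n * x * y + e * y ^ 2 =
      (a : ℤ) ^ 2 + (u * v : ℤˣ) * n * a * b + e * b ^ 2 := by
    rw [hu, hv]
    push_cast
    linear_combination (a ^ 2 : ℤ) * hu' + (e * b ^ 2 : ℤ) * hv'
  rw [h₁', abs_mul, Int.abs_eq_natAbs (u : ℤ), Int.units_natAbs, Nat.cast_one, one_mul] at h₁
  rw [h₂', abs_mul, Int.abs_eq_natAbs (v : ℤ), Int.units_natAbs, Nat.cast_one, one_mul] at h₂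
  rw [hform]
  refine ⟨u * v, a, b, ha, hb, Int.abs_eq_natAbs _, ?_⟩
  rw [← Int.abs_eq_natAbs (_ + _)]
  exact sub_two_mul_le_two_mul_abs (by exact_mod_cast hn) (by exact_mod_cast ha)
    (by exact_mod_cast hb) h₁ h₂

namespace UnitOrder

theorem norm_eq (z : UnitOrder n e) :
    z.norm = z.re ^ 2 + n * z.re * z.im + e * z.im ^ 2 := by
  rw [norm_def]
  ring

theorem isUnit_omega : IsUnit (ω : UnitOrder n e) :=
  isUnit_iff_norm_isUnit.2 (by simp [norm_eq])

theorem natAbs_norm_eq_of_associated {z w : UnitOrder n e} (h : Associated z w) :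
    z.norm.natAbs = w.norm.natAbs :=
  Int.associated_iff_natAbs.1 (h.map QuadraticAlgebra.norm)

theorem exists_associated_intCast_or_isBalanced (hn : 0 < n) (z : UnitOrder n e) :
    (∃ c : ℤ, Associated z c) ∨ IsBalanced n e z.norm.natAbs := by
  obtain ⟨w, hzw, hmin⟩ := (measure fun w : UnitOrder n e ↦ w.re.natAbs + w.im.natAbs).wf.has_min
    {w | Associated z w} ⟨z, Associated.refl z⟩
  replace hmin (u : UnitOrder n e) (hu : Associated w u) :
      |w.re| + |w.im| ≤ |u.re| + |u.im| := by
    have : w.re.natAbs + w.im.natAbs ≤ u.re.natAbs + u.im.natAbs :=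
      not_lt.1 (hmin u (hzw.trans hu))
    zify at this
    exact this
  by_cases him : w.im = 0
  · exact .inl ⟨w.re, hzw.trans (.of_eq (QuadraticAlgebra.ext (by simp) (by simp [him])))⟩
  by_cases hre : w.re = 0
  · have hw : w = ω * (w.im : UnitOrder n e) := by ext <;> simp [hre]
    refine .inl ⟨w.im, hzw.trans ?_⟩
    nth_rw 1 [hw]
    exact associated_unit_mul_left _ _ isUnit_omega
  right
  have he : |(e : ℤ)| = 1 := Int.isUnit_iff_abs_eq.1 e.isUnit
  rw [natAbs_norm_eq_of_associated hzw, norm_eq]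
  refine isBalanced_of_abs_le_abs hn hre him ?_ ?_
  · have := hmin (ω * w) (associated_unit_mul_left _ _ isUnit_omega).symm
    simp only [re_mul, im_mul, omega_re, omega_im, zero_mul, one_mul, zero_add, mul_one, abs_mul,
      abs_neg, he] at this
    linarith
  · have hw : w = ω * ⟨w.im + n * e * w.re, -(e * w.re)⟩ := by
      ext
      · simp [← mul_assoc]
      · simp
        ring
    have := hmin _ (hw ▸ associated_unit_mul_left _ _ isUnit_omega)
    simp only [abs_mul, abs_neg, he, one_mul] at this
    linarith

theorem isSquare_or_isBalanced (hn : 0 < n) (z : UnitOrder n e) :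
    IsSquare z.norm.natAbs ∨ IsBalanced n e z.norm.natAbs := by
  refine (exists_associated_intCast_or_isBalanced hn z).imp_left fun ⟨c, hc⟩ ↦ ?_
  rw [natAbs_norm_eq_of_associated hc, norm_intCast, Int.natAbs_pow]
  exact IsSquare.sq _

theorem isBalanced_of_isCoprime (hn : 0 < n) {z : UnitOrder n e} (hz : IsCoprime z.re z.im)
    (hnorm : 1 < z.norm.natAbs) : IsBalanced n e z.norm.natAbs := by
  refine (exists_associated_intCast_or_isBalanced hn z).resolve_left fun ⟨c, hc⟩ ↦ ?_
  have hdvd := algebraMap_dvd_iff.1 hc.symm.dvd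
  have hunit := Int.isUnit_iff_natAbs_eq.1 (hz.isUnit_of_dvd' hdvd.1 hdvd.2)
  rw [natAbs_norm_eq_of_associated hc, norm_intCast, Int.natAbs_pow, Int.cast_id, hunit] at hnorm
  simp at hnorm

/-- The absolute value of the norm. -/
def absNorm : UnitOrder n e →* ℕ := (Int.natAbsHom : ℤ →* ℕ).comp QuadraticAlgebra.norm

theorem not_isSquare_disc (hn : 3 ≤ n) : ¬ IsSquare ((n : ℤ) ^ 2 - 4 * e) := by
  rintro ⟨r, hr⟩
  zify at hn
  obtain ⟨s, hs₀, hs⟩ : ∃ s ≥ 0, (n : ℤ) ^ 2 - 4 * e = s ^ 2 :=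
    ⟨|r|, abs_nonneg r, by rw [sq_abs, hr, sq]⟩
  rcases Int.units_eq_one_or e with rfl | rfl <;> norm_num at hs
  · have h₁ : s < n := by nlinarith
    have h₂ : n - 1 ≤ s := by nlinarith
    obtain rfl : s = n - 1 := by lia
    lia
  · have h₁ : n < s := by nlinarith
    have h₂ : s < n + 1 := by nlinarith
    lia

theorem mem_mrange_absNorm_and_le_of_form (hn : 3 ≤ n) (h : classNumber ((n : ℤ) ^ 2 - 4 * e) = 1)
    {A : ℕ} {B C u v w : ℤ} (hA : 1 < A) (hdisc : B ^ 2 - 4 * A * C = n ^ 2 - 4 * e)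
    (hprim : u * A + v * B + w * C = 1) :
    A ∈ MonoidHom.mrange (absNorm (n := n) (e := e)) ∧ n ≤ 2 * A + 2 := by
  have hb : (n : ℤ) ^ 2 + 4 * (-e : ℤ) = n ^ 2 - 4 * e := by ring
  have hns : ¬ IsSquare ((n : ℤ) ^ 2 + 4 * (-e : ℤ)) := hb ▸ not_isSquare_disc hn
  have : IsDomain (UnitOrder n e) := isDomain_quadraticAlgebra hns
  have : Subsingleton (ClassGroup (UnitOrder n e)) :=
    subsingleton_classGroup_of_classNumber_eq_one hns (hb ▸ h)
  obtain ⟨k, rfl⟩ : ∃ k, B = 2 * k + n := by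
    have hpar : Even (B ^ 2 - (n : ℤ) ^ 2) := ⟨2 * (A * C - e), by linear_combination hdisc⟩
    rw [Int.even_sub, Int.even_pow' two_ne_zero, Int.even_pow' two_ne_zero, ← Int.even_sub] at hpar
    obtain ⟨k, hk⟩ := hpar
    exact ⟨k, by linear_combination hk⟩
  obtain ⟨z, hz, hnorm⟩ := exists_isCoprime_abs_norm_eq (a := -(e : ℤ)) (b := n) (k := k)
    (by lia) (by linarith) hprim
  have hnorm' : z.norm.natAbs = A := by
    rwa [Nat.abs_cast, Int.abs_eq_natAbs, Nat.cast_inj] at hnorm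
  refine ⟨⟨z, hnorm'⟩, ?_⟩
  have := (isBalanced_of_isCoprime (by lia) hz (hnorm' ▸ hA)).le
  rwa [hnorm'] at this

theorem exists_two_pow_mul_eq_sq_sub (t : ℤ) (e : ℤˣ) :
    ∃ (i : ℕ) (j C : ℤ), 1 ≤ i ∧ i ≤ 3 ∧ Odd C ∧ 2 ^ i * C = j ^ 2 - (t ^ 2 - e) := by
  rcases Int.units_eq_one_or e with rfl | rfl
  · obtain ⟨s, rfl | rfl⟩ := Int.even_or_odd' t
    · exact ⟨1, 1, 1 - 2 * s ^ 2, by simp, by simp, ⟨-s ^ 2, by ring⟩, by push_cast; ring⟩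
    · obtain ⟨r, hr⟩ := Int.even_mul_succ_self s
      exact ⟨2, 2, 1 - 2 * r, by simp, by simp, ⟨-r, by ring⟩,
        by push_cast; linear_combination 4 * hr⟩
  · obtain ⟨s, rfl | rfl⟩ := Int.even_or_odd' t
    · obtain ⟨r, rfl | rfl⟩ := Int.even_or_odd' s
      · exact ⟨3, 3, 1 - 2 * r ^ 2, by simp, by simp, ⟨-r ^ 2, by ring⟩, by push_cast; ring⟩
      · exact ⟨2, 1, -(2 * r + 1) ^ 2, by simp, by simp, (odd_two_mul_add_one r).pow.neg,
          by push_cast; ring⟩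
    · exact ⟨1, 0, -(2 * s ^ 2 + 2 * s + 1), by simp, by simp, ⟨-(s ^ 2 + s + 1), by ring⟩,
        by push_cast; ring⟩

theorem le_eighteen_of_even (hn : 3 ≤ n) (heven : Even n)
    (h : classNumber ((n : ℤ) ^ 2 - 4 * e) = 1) : n ≤ 18 := by
  obtain ⟨t, rfl⟩ := heven
  obtain ⟨i, j, C, hi₁, hi₃, hC, hform⟩ := exists_two_pow_mul_eq_sq_sub t e
  obtain ⟨u, w, huw⟩ : IsCoprime ((2 : ℤ) ^ i) C := (Int.isCoprime_two_left.2 hC).pow_left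
  have := (mem_mrange_absNorm_and_le_of_form hn h (A := 2 ^ i) (B := 2 * j) (C := C) (u := u)
    (v := 0) (w := w) (Nat.one_lt_two_pow (by lia)) (by push_cast; linear_combination -4 * hform)
    (by push_cast; linear_combination huw)).2
  have : 2 ^ i ≤ 2 ^ 3 := Nat.pow_le_pow_right two_pos hi₃
  lia

theorem disc_emod_eight_of_odd (hodd : Odd n) : ((n : ℤ) ^ 2 - 4 * e) % 8 = 5 := by
  have := Int.eight_dvd_sq_sub_one_of_odd ((Int.odd_coe_nat n).2 hodd)
  rcases Int.units_eq_one_or e with rfl | rfl <;> norm_num <;> lia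

theorem exists_four_mul_mul_eq_sq_sub {A B D : ℤ} (hA : Odd A) (hB : Odd B) (hD : D % 4 = 1)
    (h : A ∣ B ^ 2 - D) : ∃ C, 4 * A * C = B ^ 2 - D := by
  have hfour : (4 : ℤ) ∣ B ^ 2 - D := by
    have := Int.sq_mod_four_eq_one_of_odd hB
    lia
  have hcop : IsCoprime (2 ^ 2 : ℤ) A := (Int.isCoprime_two_left.2 hA).pow_left
  obtain ⟨C, hC⟩ := IsCoprime.mul_dvd (by simpa using hcop) hfour h
  exact ⟨C, hC.symm⟩

theorem le_of_prime_dvd_of_not_sq_dvd (hn : 3 ≤ n) (hodd : Odd n)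
    (h : classNumber ((n : ℤ) ^ 2 - 4 * e) = 1) {p : ℕ} (hp : p.Prime) (hp2 : Odd p)
    (hpd : (p : ℤ) ∣ n ^ 2 - 4 * e) (hsq : ¬ (p : ℤ) ^ 2 ∣ n ^ 2 - 4 * e) : n ≤ 2 * p + 2 := by
  have hp2' : Odd (p : ℤ) := (Int.odd_coe_nat p).2 hp2
  have h8 := disc_emod_eight_of_odd (e := e) hodd
  obtain ⟨C, hC⟩ := exists_four_mul_mul_eq_sq_sub hp2' hp2' (by lia)
    (dvd_sub (dvd_pow_self (p : ℤ) two_ne_zero) hpd)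
  have hpC : ¬ (p : ℤ) ∣ C := by
    rintro ⟨c, rfl⟩
    exact hsq ⟨1 - 4 * c, by linarith⟩
  obtain ⟨u, w, huw⟩ := (Prime.coprime_iff_not_dvd (Nat.prime_iff_prime_int.1 hp)).2 hpC
  exact (mem_mrange_absNorm_and_le_of_form hn h (B := p) (C := C) (u := u) (v := 0) (w := w)
    hp.one_lt
    (by linarith) (by linear_combination huw)).2

theorem le_of_prime_sq_dvd (hn : 3 ≤ n) (hodd : Odd n)
    (h : classNumber ((n : ℤ) ^ 2 - 4 * e) = 1) {p : ℕ} (hp : p.Prime) (hp2 : Odd p)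
    (hsq : (p : ℤ) ^ 2 ∣ n ^ 2 - 4 * e) : n ≤ 2 * p ^ 2 + 2 := by
  have hp' := Nat.prime_iff_prime_int.1 hp
  have hp2' : Odd (p : ℤ) := (Int.odd_coe_nat p).2 hp2
  have h8 := disc_emod_eight_of_odd (e := e) hodd
  obtain ⟨D, hD⟩ := hsq
  have hD4 : D % 4 = 1 := by
    have : (p : ℤ) ^ 2 * D % 4 = D % 4 := by
      rw [Int.mul_emod, Int.sq_mod_four_eq_one_of_odd hp2', one_mul, Int.emod_emod]
    lia
  obtain ⟨j, hj, hjD⟩ : ∃ j : ℤ, Odd j ∧ ¬ (p : ℤ) ∣ j ^ 2 - D := by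
    by_cases hpD : (p : ℤ) ∣ D
    · exact ⟨1, odd_one, fun hdvd ↦ hp'.not_dvd_one (by simpa using (dvd_sub_left hpD).1 hdvd)⟩
    · exact ⟨p, hp2', fun hdvd ↦
        hpD ((dvd_sub_right (dvd_pow_self (p : ℤ) two_ne_zero)).1 hdvd)⟩
  obtain ⟨C, hC⟩ := exists_four_mul_mul_eq_sq_sub odd_one hj hD4 (one_dvd _)
  have hpC : ¬ (p : ℤ) ∣ C := fun hdvd ↦ hjD (hC ▸ hdvd.mul_left _)
  obtain ⟨u, w, huw⟩ : IsCoprime ((p : ℤ) ^ 2) C :=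
    ((Prime.coprime_iff_not_dvd hp').2 hpC).pow_left
  exact (mem_mrange_absNorm_and_le_of_form hn h (A := p ^ 2) (B := p * j) (C := C) (u := u)
    (v := 0) (w := w)
    (Nat.one_lt_pow two_ne_zero hp.one_lt)
    (by push_cast; linear_combination -hD - (p : ℤ) ^ 2 * hC)
    (by push_cast; linear_combination huw)).2

theorem le_of_prime_dvd (hn : 3 ≤ n) (hodd : Odd n) (h : classNumber ((n : ℤ) ^ 2 - 4 * e) = 1)
    {p : ℕ} (hp : p.Prime) (hpd : (p : ℤ) ∣ n ^ 2 - 4 * e) : n ≤ 2 * p ^ 2 + 2 := by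
  have hp2 : Odd p := by
    refine hp.odd_of_ne_two ?_
    rintro rfl
    have := disc_emod_eight_of_odd (e := e) hodd
    lia
  by_cases hsq : (p : ℤ) ^ 2 ∣ n ^ 2 - 4 * e
  · exact le_of_prime_sq_dvd hn hodd h hp hp2 hsq
  · exact (le_of_prime_dvd_of_not_sq_dvd hn hodd h hp hp2 hpd hsq).trans (by nlinarith)

theorem mem_mrange_absNorm_of_jacobiSym_eq_one (hn : 3 ≤ n) (hodd : Odd n)
    (h : classNumber ((n : ℤ) ^ 2 - 4 * e) = 1) {d : ℕ} (hd : (d : ℤ) = n ^ 2 - 4 * e)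
    {p : ℕ} (hp : p.Prime) (hpd : jacobiSym p d = 1) :
    p ∈ MonoidHom.mrange (absNorm (n := n) (e := e)) := by
  have h8 := disc_emod_eight_of_odd (e := e) hodd
  rw [← hd] at h8
  have := Fact.mk hp
  have hp2 : Odd p := by
    refine hp.odd_of_ne_two ?_
    rintro rfl
    rw [Nat.cast_two, jacobiSym.at_two (Nat.odd_iff.2 (by lia)), ZMod.χ₈_nat_mod_eight,
      show d % 8 = 5 by lia] at hpd
    revert hpd
    decide
  have hp2' : Odd (p : ℤ) := (Int.odd_coe_nat p).2 hp2
  have hrec : jacobiSym d p = 1 := by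
    rwa [jacobiSym.quadratic_reciprocity_one_mod_four (by lia) hp2]
  obtain ⟨x, hx⟩ := ZMod.isSquare_of_jacobiSym_eq_one hrec
  obtain ⟨B, hB, rfl⟩ : ∃ B : ℤ, Odd B ∧ (B : ZMod p) = x := by
    obtain ⟨s, rfl⟩ := ZMod.intCast_surjective x
    rcases Int.even_or_odd s with hs | hs
    exacts [⟨s + p, hs.add_odd hp2', by simp⟩, ⟨s, hs, rfl⟩]
  have hBd : (p : ℤ) ∣ B ^ 2 - d := by
    rw [← ZMod.intCast_zmod_eq_zero_iff_dvd, Int.cast_sub, hx, Int.cast_pow, sq, sub_self]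
  have hpB : ¬ (p : ℤ) ∣ B := fun hdvd ↦ by
    have hpd' : (p : ℤ) ∣ d := (dvd_sub_right (dvd_pow hdvd two_ne_zero)).1 hBd
    have hgcd : ¬ Int.gcd d p = 1 := by
      rw [Int.gcd_natCast_natCast, Nat.gcd_eq_right (Int.natCast_dvd_natCast.1 hpd')]
      exact hp.ne_one
    simp [jacobiSym.eq_zero_iff_not_coprime.2 hgcd] at hrec
  obtain ⟨C, hC⟩ := exists_four_mul_mul_eq_sq_sub hp2' hB (by lia) hBd
  obtain ⟨u, v, huv⟩ := (Prime.coprime_iff_not_dvd (Nat.prime_iff_prime_int.1 hp)).2 hpB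
  exact (mem_mrange_absNorm_and_le_of_form hn h (B := B) (C := C) (u := u) (v := v) (w := 0)
    hp.one_lt
    (by linarith) (by linear_combination huv)).1

end UnitOrder

end UnitGenerated

section QuadraticCharacter

open scoped LSeries.notation

/-- The real-valued quadratic character `m ↦ (m / d)` given by the Jacobi symbol. -/
def quadChar (d m : ℕ) : ℝ := (jacobiSym m d : ℤ)

theorem quadChar_one (d : ℕ) : quadChar d 1 = 1 := by simp [quadChar]

theorem quadChar_mul (d a b : ℕ) : quadChar d (a * b) = quadChar d a * quadChar d b := by
  simp [quadChar, jacobiSym.mul_left]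

theorem quadChar_pow (d a k : ℕ) : quadChar d (a ^ k) = quadChar d a ^ k := by
  simp [quadChar, jacobiSym.pow_left]

theorem quadChar_trichotomy (d m : ℕ) :
    quadChar d m = 0 ∨ quadChar d m = 1 ∨ quadChar d m = -1 := by
  rcases jacobiSym.trichotomy m d with h | h | h <;> simp [quadChar, h]

theorem abs_quadChar_le_one (d m : ℕ) : |quadChar d m| ≤ 1 := by
  rcases quadChar_trichotomy d m with h | h | h <;> simp [h]

theorem quadChar_two {d : ℕ} (hd : d % 8 = 5) : quadChar d 2 = -1 := by
  have : jacobiSym (2 : ℕ) d = -1 := by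
    rw [Nat.cast_two, jacobiSym.at_two (Nat.odd_iff.2 (by lia)), ZMod.χ₈_nat_mod_eight, hd]
    decide
  rw [quadChar, this, Int.cast_neg, Int.cast_one]

/-- The Dirichlet coefficients of the part away from `d` of `ζ(s) L(s, χ)`, for the character
`χ = quadChar d`. If `d` is a fundamental discriminant and `m` is coprime to `d`, this is
the number of ideals of norm `m` in the quadratic field of discriminant `d`. -/
def idealCount (d : ℕ) : ℕ → ℝ := quadChar d ^ 2 ⍟ quadChar d

theorem idealCount_one (d : ℕ) : idealCount d 1 = 1 := by
  simp [idealCount, LSeries.convolution_def, quadChar_one]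

theorem idealCount_zero (d : ℕ) : idealCount d 0 = 0 := LSeries.convolution_map_zero _ _

theorem isMultiplicative_toArithmeticFunction {f : ℕ → ℝ} (h₁ : f 1 = 1)
    (hmul : ∀ a b, f (a * b) = f a * f b) : (toArithmeticFunction f).IsMultiplicative := by
  refine ArithmeticFunction.IsMultiplicative.iff_ne_zero.2 ⟨by simp [toArithmeticFunction, h₁], ?_⟩
  intro a b ha hb _
  simp [toArithmeticFunction, ha, hb, hmul]

theorem idealCount_mul (d : ℕ) {a b : ℕ} (h : a.Coprime b) :
    idealCount d (a * b) = idealCount d a * idealCount d b := by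
  have hχ := isMultiplicative_toArithmeticFunction (quadChar_one d) (quadChar_mul d)
  have hχ₂ : (toArithmeticFunction (quadChar d ^ 2)).IsMultiplicative :=
    isMultiplicative_toArithmeticFunction (by simp [quadChar_one])
      (by simp [quadChar_mul, mul_pow])
  exact (hχ₂.mul hχ).map_mul_of_coprime h

theorem idealCount_prime_pow (d k : ℕ) {p : ℕ} (hp : p.Prime) :
    idealCount d (p ^ k) = ∑ i ∈ Finset.range (k + 1), quadChar d p ^ (2 * (k - i) + i) := by
  rw [idealCount, LSeries.convolution_def]
  dsimp only
  rw [Nat.sum_divisorsAntidiagonal' (fun a b ↦ (quadChar d ^ 2) a * quadChar d b),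
    Nat.sum_divisors_prime_pow hp]
  refine Finset.sum_congr rfl fun i hi ↦ ?_
  rw [Nat.pow_div (Finset.mem_range_succ_iff.1 hi) hp.pos, Pi.pow_apply, quadChar_pow,
    quadChar_pow, ← pow_mul, ← pow_add, mul_comm (k - i)]

theorem idealCount_prime_pow_of_eq_neg_one {d p : ℕ} (hp : p.Prime) (h : quadChar d p = -1)
    (k : ℕ) : idealCount d (p ^ k) = if Even k then 1 else 0 := by
  simp only [idealCount_prime_pow d k hp, h, pow_add, pow_mul, neg_one_sq, one_pow, one_mul,
    neg_one_geom_sum, Nat.even_add_one]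
  split_ifs <;> rfl

theorem idealCount_nonneg (d m : ℕ) : 0 ≤ idealCount d m := by
  induction m using Nat.recOnPosPrimePosCoprime with
  | zero => exact (idealCount_zero d).ge
  | one => exact (idealCount_one d).symm ▸ zero_le_one
  | coprime a b _ _ hab iha ihb => exact idealCount_mul d hab ▸ mul_nonneg iha ihb
  | prime_pow p k hp _ =>
    rcases quadChar_trichotomy d p with h | h | h
    · exact idealCount_prime_pow d k hp ▸ Finset.sum_nonneg fun i _ ↦ by simp [h]
    · exact idealCount_prime_pow d k hp ▸ Finset.sum_nonneg fun i _ ↦ by simp [h]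
    · rw [idealCount_prime_pow_of_eq_neg_one hp h]
      positivity

theorem idealCount_le_card_divisors (d m : ℕ) : idealCount d m ≤ m.divisors.card := by
  rw [idealCount, LSeries.convolution_def]
  dsimp only
  rw [Nat.sum_divisorsAntidiagonal (fun a b ↦ (quadChar d ^ 2) a * quadChar d b),
    ← nsmul_one m.divisors.card]
  refine Finset.sum_le_card_nsmul _ _ _ fun k _ ↦ (le_abs_self _).trans ?_
  rw [abs_mul, Pi.pow_apply, abs_pow]
  exact mul_le_one₀ (pow_le_one₀ (abs_nonneg _) (abs_quadChar_le_one d k)) (abs_nonneg _)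
    (abs_quadChar_le_one d _)

theorem mem_of_idealCount_ne_zero {d : ℕ} {S : Submonoid ℕ} (hsq : ∀ m, m ^ 2 ∈ S)
    (hsplit : ∀ p : ℕ, p.Prime → quadChar d p = 1 → p ∈ S) {m : ℕ} (hm : idealCount d m ≠ 0) :
    m ∈ S := by
  induction m using Nat.recOnPosPrimePosCoprime with
  | zero => exact absurd (idealCount_zero d) hm
  | one => exact S.one_mem
  | coprime a b _ _ hab iha ihb =>
    rw [idealCount_mul d hab] at hm
    exact S.mul_mem (iha (left_ne_zero_of_mul hm)) (ihb (right_ne_zero_of_mul hm))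
  | prime_pow p k hp hk =>
    rcases quadChar_trichotomy d p with h | h | h
    · refine absurd (idealCount_prime_pow d k hp ▸ Finset.sum_eq_zero fun i _ ↦ ?_) hm
      rw [h, zero_pow (by lia)]
    · exact S.pow_mem (hsplit p hp h) k
    · obtain ⟨j, rfl⟩ : Even k := by
        by_contra hodd
        exact hm (by rw [idealCount_prime_pow_of_eq_neg_one hp h, if_neg hodd])
      exact (pow_add p j j).trans (sq (p ^ j)).symm ▸ hsq (p ^ j)

/-- The properties of `(n, e)` and `d` deduced from class number one of the order of discriminant
`d = n² - 4e`. By the last one the ideals prime to `d`, apart from those of square norm, have norms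
as sparse as the values of a quadratic form. -/
structure SparseNorms (n : ℕ) (e : ℤˣ) (d : ℕ) : Prop where
  three_le : 3 ≤ n
  disc_mod_eight : d % 8 = 5
  disc_le : d ≤ 2 * n ^ 2
  le_of_prime_dvd : ∀ p : ℕ, p.Prime → p ∣ d → n ≤ 2 * p ^ 2 + 2
  isSquare_or_isBalanced : ∀ m : ℕ, idealCount d m ≠ 0 → IsSquare m ∨ IsBalanced n e m

theorem exists_sparseNorms_of_classNumber_eq_one {n : ℕ} {e : ℤˣ} (hn : 19 ≤ n)
    (h : classNumber ((n : ℤ) ^ 2 - 4 * e) = 1) : ∃ d, SparseNorms n e d := by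
  have hn3 : 3 ≤ n := by lia
  have hodd : Odd n := Nat.not_even_iff_odd.1 fun heven ↦ by
    have := UnitOrder.le_eighteen_of_even hn3 heven h
    lia
  have hbound : 0 ≤ (n : ℤ) ^ 2 - 4 * e ∧ (n : ℤ) ^ 2 - 4 * e ≤ 2 * n ^ 2 := by
    rcases Int.units_eq_one_or e with rfl | rfl <;> push_cast <;> constructor <;> nlinarith
  obtain ⟨d, hd⟩ := Int.eq_ofNat_of_zero_le hbound.1
  have h8 := UnitOrder.disc_emod_eight_of_odd (e := e) hodd
  have hsplit (p : ℕ) (hp : p.Prime) (hpd : quadChar d p = 1) :=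
    UnitOrder.mem_mrange_absNorm_of_jacobiSym_eq_one hn3 hodd h hd.symm hp
      (Int.cast_eq_one.1 hpd)
  refine ⟨d, hn3, by lia, by zify; lia, fun p hp hpd ↦ ?_, fun m hm ↦ ?_⟩
  · exact UnitOrder.le_of_prime_dvd hn3 hodd h hp (hd ▸ Int.natCast_dvd_natCast.2 hpd)
  · obtain ⟨z, rfl⟩ := mem_of_idealCount_ne_zero
      (fun k ↦ MonoidHom.mem_mrange.2 ⟨(k : UnitOrder n e), by simp [UnitOrder.absNorm]⟩) hsplit hm
    exact UnitOrder.isSquare_or_isBalanced (by lia) z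

end QuadraticCharacter

section DirichletConvolution

open Finset
open scoped LSeries.notation

theorem convolution_assoc {R : Type*} [Semiring R] (f g h : ℕ → R) :
    f ⍟ g ⍟ h = f ⍟ (g ⍟ h) := by
  simp only [LSeries.convolution, ArithmeticFunction.toArithmeticFunction_eq_self, mul_assoc]

theorem convolution_mul_of_map_mul {R : Type*} [CommSemiring R] {h : ℕ → R}
    (hh : ∀ a b, h (a * b) = h a * h b) (f g : ℕ → R) :
    f ⍟ g * h = (f * h) ⍟ (g * h) := by
  ext m
  simp only [LSeries.convolution_def, Pi.mul_apply, sum_mul]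
  refine sum_congr rfl fun x hx ↦ ?_
  rw [← (Nat.mem_divisorsAntidiagonal.1 hx).1, hh, mul_mul_mul_comm]

theorem single_convolution_apply {R : Type*} [Semiring R] (p m : ℕ) (f : ℕ → R) :
    (Pi.single p 1 ⍟ f) m = if p ∈ m.divisors then f (m / p) else 0 := by
  rw [LSeries.convolution_def]
  dsimp only
  rw [Nat.sum_divisorsAntidiagonal (fun a b ↦ (Pi.single p 1 : ℕ → R) a * f b)]
  simp [Pi.single_apply]

theorem sum_Ioc_convolution {R : Type*} [Semiring R] (f g : ℕ → R) (N : ℕ) :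
    ∑ m ∈ Ioc 0 N, (f ⍟ g) m = ∑ k ∈ Ioc 0 N, f k * ∑ l ∈ Ioc 0 (N / k), g l := by
  have hne {k n : ℕ} (hk : k ∈ Ioc 0 n) : k ≠ 0 := (mem_Ioc.1 hk).1.ne'
  refine (ArithmeticFunction.sum_Ioc_mul_eq_sum_sum _ _ N).trans ?_
  refine sum_congr rfl fun k hk ↦ congrArg₂ _ (if_neg (hne hk)) ?_
  exact sum_congr rfl fun l hl ↦ if_neg (hne hl)

/-- **Dirichlet's hyperbola method.** -/
theorem sum_Ioc_mul_convolution {R : Type*} [CommRing R] (f g : ℕ → R) (A B : ℕ) :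
    ∑ m ∈ Ioc 0 (A * B), (f ⍟ g) m =
      ∑ k ∈ Ioc 0 A, f k * ∑ l ∈ Ioc 0 (A * B / k), g l +
        ∑ l ∈ Ioc 0 B, g l * ∑ k ∈ Ioc 0 (A * B / l), f k -
      (∑ k ∈ Ioc 0 A, f k) * ∑ l ∈ Ioc 0 B, g l := by
  rcases Nat.eq_zero_or_pos B with rfl | hB
  · simp
  have hlarge : ∑ k ∈ Ioc A (A * B), f k * ∑ l ∈ Ioc 0 (A * B / k), g l =
      ∑ l ∈ Ioc 0 B, ∑ k ∈ Ioc A (A * B / l), f k * g l := by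
    simp only [mul_sum]
    refine sum_comm' fun k l ↦ ?_
    simp only [mem_Ioc]
    constructor
    · rintro ⟨⟨hk, -⟩, hl, hkl⟩
      have hkl := (Nat.le_div_iff_mul_le (by lia)).1 hkl
      exact ⟨⟨hk, (Nat.le_div_iff_mul_le hl).2 (by lia)⟩, hl, by nlinarith⟩
    · rintro ⟨⟨hk, hkl⟩, hl, -⟩
      have hkl := (Nat.le_div_iff_mul_le hl).1 hkl
      exact ⟨⟨hk, by nlinarith⟩, hl, (Nat.le_div_iff_mul_le (by lia)).2 (by lia)⟩
  have hsplit : ∀ l ∈ Ioc 0 B, ∑ k ∈ Ioc A (A * B / l), f k * g l =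
      g l * ∑ k ∈ Ioc 0 (A * B / l), f k - (∑ k ∈ Ioc 0 A, f k) * g l := fun l hl ↦ by
    have hAl : A ≤ A * B / l :=
      (Nat.le_div_iff_mul_le (mem_Ioc.1 hl).1).2 (Nat.mul_le_mul_left A (mem_Ioc.1 hl).2)
    rw [← sum_Ioc_consecutive f (Nat.zero_le A) hAl, ← sum_mul]
    ring
  rw [sum_Ioc_convolution, ← sum_Ioc_consecutive _ (Nat.zero_le A) (Nat.le_mul_of_pos_right A hB),
    hlarge, sum_congr rfl hsplit, sum_sub_distrib, ← mul_sum, add_sub_assoc]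

end DirichletConvolution

section BoundedSums

open Finset Filter Topology

/-- The sums of `f` over all intervals are bounded by `M`. -/
def HasBoundedSums (f : ℕ → ℝ) (M : ℝ) : Prop := ∀ s t : ℕ, |∑ m ∈ Ioc s t, f m| ≤ M

variable {f : ℕ → ℝ} {M β : ℝ}

theorem HasBoundedSums.nonneg (hf : HasBoundedSums f M) : 0 ≤ M := (abs_nonneg _).trans (hf 0 0)

theorem HasBoundedSums.abs_sum_mul_sub_le (hf : HasBoundedSums f M) {w : ℕ → ℝ} {s t : ℕ}
    (hst : s + 1 ≤ t) (hw : AntitoneOn w (Set.Ioi s)) :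
    |∑ m ∈ Ioc s t, f m * w m - (∑ m ∈ Ioc s t, f m) * w t| ≤ M * (w (s + 1) - w t) := by
  induction t, hst using Nat.le_induction with
  | base => simp
  | succ t hst ih =>
    have hwt : 0 ≤ w t - w (t + 1) :=
      sub_nonneg.2 (hw (Set.mem_Ioi.2 hst) (Set.mem_Ioi.2 (by lia)) t.le_succ)
    rw [sum_Ioc_succ_top (by lia), sum_Ioc_succ_top (by lia)]
    calc _ = |(∑ m ∈ Ioc s t, f m * w m - (∑ m ∈ Ioc s t, f m) * w t) +
          (∑ m ∈ Ioc s t, f m) * (w t - w (t + 1))| := by ring_nf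
      _ ≤ M * (w (s + 1) - w t) + M * (w t - w (t + 1)) := by
        refine (abs_add_le _ _).trans (add_le_add ih ?_)
        rw [abs_mul, abs_of_nonneg hwt]
        exact mul_le_mul_of_nonneg_right (hf s t) hwt
      _ = _ := by ring

theorem HasBoundedSums.abs_sum_mul_le (hf : HasBoundedSums f M) {w : ℕ → ℝ} {s : ℕ}
    (hw : AntitoneOn w (Set.Ioi s)) (hw₀ : ∀ m, 0 ≤ w m) (t : ℕ) :
    |∑ m ∈ Ioc s t, f m * w m| ≤ M * w (s + 1) := by
  rcases le_or_gt t s with hts | hst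
  · rw [Ioc_eq_empty (by lia), sum_empty, abs_zero]
    exact mul_nonneg hf.nonneg (hw₀ _)
  calc _ = |(∑ m ∈ Ioc s t, f m * w m - (∑ m ∈ Ioc s t, f m) * w t) +
        (∑ m ∈ Ioc s t, f m) * w t| := by ring_nf
    _ ≤ M * (w (s + 1) - w t) + M * w t := by
      refine (abs_add_le _ _).trans (add_le_add (hf.abs_sum_mul_sub_le hst hw) ?_)
      rw [abs_mul, abs_of_nonneg (hw₀ t)]
      exact mul_le_mul_of_nonneg_right (hf s t) (hw₀ t)
    _ = _ := by ring

/-- The partial sums of the Dirichlet series of `f` at the real point `β`. -/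
def partialSum (f : ℕ → ℝ) (β : ℝ) (X : ℕ) : ℝ := ∑ m ∈ Ioc 0 X, f m * (m : ℝ) ^ (-β)

/-- The value at `β` of the possibly conditionally convergent Dirichlet series of `f`, as the limit
of its partial sums (a junk value if they diverge). -/
def dirichletValue (f : ℕ → ℝ) (β : ℝ) : ℝ := limUnder atTop (partialSum f β)

theorem partialSum_sub_partialSum (f : ℕ → ℝ) (β : ℝ) {s t : ℕ} (h : s ≤ t) :
    partialSum f β t - partialSum f β s = ∑ m ∈ Ioc s t, f m * (m : ℝ) ^ (-β) := by
  rw [partialSum, partialSum, ← sum_Ioc_consecutive _ (Nat.zero_le s) h, add_sub_cancel_left]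

theorem HasBoundedSums.abs_partialSum_sub_le (hf : HasBoundedSums f M) (hβ : 0 ≤ β) {s t : ℕ}
    (h : s ≤ t) : |partialSum f β t - partialSum f β s| ≤ M * ((s + 1 : ℕ) : ℝ) ^ (-β) := by
  rw [partialSum_sub_partialSum f β h]
  refine hf.abs_sum_mul_le (w := fun m ↦ (m : ℝ) ^ (-β)) (fun a ha b _ hab ↦ ?_)
    (fun m ↦ by positivity) t
  exact Real.rpow_le_rpow_of_nonpos (by exact_mod_cast (Nat.zero_le s).trans_lt ha)
    (Nat.cast_le.2 hab) (neg_nonpos.2 hβ)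

theorem tendsto_natCast_succ_rpow_neg (hβ : 0 < β) :
    Tendsto (fun N : ℕ ↦ ((N + 1 : ℕ) : ℝ) ^ (-β)) atTop (𝓝 0) :=
  ((tendsto_rpow_neg_atTop hβ).comp tendsto_natCast_atTop_atTop).comp (tendsto_add_atTop_nat 1)

theorem HasBoundedSums.tendsto_partialSum (hf : HasBoundedSums f M) (hβ : 0 < β) :
    Tendsto (partialSum f β) atTop (𝓝 (dirichletValue f β)) := by
  have hcauchy : CauchySeq (partialSum f β) := by
    refine cauchySeq_of_le_tendsto_0' (fun N ↦ M * ((N + 1 : ℕ) : ℝ) ^ (-β)) (fun s t hst ↦ ?_) ?_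
    · rw [dist_comm, Real.dist_eq]
      exact hf.abs_partialSum_sub_le hβ.le hst
    · simpa using (tendsto_natCast_succ_rpow_neg hβ).const_mul M
  exact hcauchy.tendsto_limUnder

theorem HasBoundedSums.abs_dirichletValue_sub_le (hf : HasBoundedSums f M) (hβ : 0 < β) (X : ℕ) :
    |dirichletValue f β - partialSum f β X| ≤ M * ((X + 1 : ℕ) : ℝ) ^ (-β) := by
  refine le_of_tendsto ((hf.tendsto_partialSum hβ).sub_const (partialSum f β X)).abs ?_
  filter_upwards [eventually_ge_atTop X] with t ht using hf.abs_partialSum_sub_le hβ.le ht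

theorem continuous_partialSum (f : ℕ → ℝ) (X : ℕ) : Continuous fun β ↦ partialSum f β X := by
  refine continuous_finsetSum _ fun m hm ↦ continuous_const.mul ?_
  have hm0 : (m : ℝ) ≠ 0 := Nat.cast_ne_zero.2 (mem_Ioc.1 hm).1.ne'
  exact (Real.continuous_const_rpow hm0).comp continuous_neg

theorem HasBoundedSums.continuousOn_dirichletValue (hf : HasBoundedSums f M) (hβ : 0 < β) :
    ContinuousOn (dirichletValue f) (Set.Ici β) := by
  have hunif : TendstoUniformlyOn (fun X b ↦ partialSum f b X) (dirichletValue f) atTop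
      (Set.Ici β) := by
    rw [Metric.tendstoUniformlyOn_iff]
    intro ε hε
    have htend : Tendsto (fun N : ℕ ↦ M * ((N + 1 : ℕ) : ℝ) ^ (-β)) atTop (𝓝 0) := by
      simpa using (tendsto_natCast_succ_rpow_neg hβ).const_mul M
    filter_upwards [htend.eventually (gt_mem_nhds hε)] with X hX b hb
    refine (hf.abs_dirichletValue_sub_le (hβ.trans_le hb) X).trans_lt (lt_of_le_of_lt ?_ hX)
    have := hf.nonneg
    gcongr
    · simp
    · exact hb
  exact hunif.continuousOn (Frequently.of_forall fun X ↦ (continuous_partialSum f X).continuousOn)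

end BoundedSums

section Hyperbola

open Finset
open scoped LSeries.notation

theorem convolution_mul_rpow_neg (f g : ℕ → ℝ) (β : ℝ) :
    (fun m ↦ (f ⍟ g) m * (m : ℝ) ^ (-β)) =
      (fun m ↦ f m * (m : ℝ) ^ (-β)) ⍟ fun m ↦ g m * (m : ℝ) ^ (-β) :=
  convolution_mul_of_map_mul (h := fun m : ℕ ↦ (m : ℝ) ^ (-β))
    (fun a b ↦ by rw [Nat.cast_mul, Real.mul_rpow a.cast_nonneg b.cast_nonneg]) f g

theorem partialSum_convolution (f g : ℕ → ℝ) (β : ℝ) (X : ℕ) :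
    partialSum (f ⍟ g) β X =
      ∑ k ∈ Ioc 0 X, f k * (k : ℝ) ^ (-β) * partialSum g β (X / k) := by
  rw [partialSum, convolution_mul_rpow_neg, sum_Ioc_convolution]
  rfl

theorem partialSum_convolution_mul (f g : ℕ → ℝ) (β : ℝ) (A B : ℕ) :
    partialSum (f ⍟ g) β (A * B) =
      ∑ k ∈ Ioc 0 A, f k * (k : ℝ) ^ (-β) * partialSum g β (A * B / k) +
        ∑ l ∈ Ioc 0 B, g l * (l : ℝ) ^ (-β) * partialSum f β (A * B / l) -
      partialSum f β A * partialSum g β B := by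
  rw [partialSum, convolution_mul_rpow_neg, sum_Ioc_mul_convolution]
  rfl

theorem partialSum_single_convolution {p : ℕ} (hp : p ≠ 0) (f : ℕ → ℝ) (β : ℝ) (X : ℕ) :
    partialSum (Pi.single p 1 ⍟ f) β X = (p : ℝ) ^ (-β) * partialSum f β (X / p) := by
  have hterm (k : ℕ) : (Pi.single p 1 : ℕ → ℝ) k * (k : ℝ) ^ (-β) * partialSum f β (X / k) =
      if k = p then (p : ℝ) ^ (-β) * partialSum f β (X / p) else 0 := by
    split_ifs with h <;> simp [h]
  simp only [partialSum_convolution, hterm, sum_ite_eq', mem_Ioc]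
  refine ite_eq_left_iff.2 fun h ↦ ?_
  rw [Nat.div_eq_of_lt (by lia), partialSum, Ioc_self, sum_empty, mul_zero]

variable {f g : ℕ → ℝ} {M M' β : ℝ}

theorem rpow_neg_mul_rpow_neg_div_le (hβ : 0 ≤ β) {N k : ℕ} (hN : N ≠ 0) (hk : k ≠ 0) :
    (k : ℝ) ^ (-β) * ((N / k + 1 : ℕ) : ℝ) ^ (-β) ≤ (N : ℝ) ^ (-β) := by
  rw [← Real.mul_rpow k.cast_nonneg (Nat.cast_nonneg _), ← Nat.cast_mul]
  refine Real.rpow_le_rpow_of_nonpos (by positivity) (Nat.cast_le.2 ?_) (neg_nonpos.2 hβ)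
  exact (Nat.lt_mul_div_succ N (Nat.pos_of_ne_zero hk)).le

theorem HasBoundedSums.abs_sum_mul_partialSum_sub_le (hg : HasBoundedSums g M)
    (hf : ∀ m, |f m| ≤ 1) (hβ : 0 < β) {N : ℕ} (hN : N ≠ 0) (Y : ℕ) :
    |∑ k ∈ Ioc 0 Y, f k * (k : ℝ) ^ (-β) * (partialSum g β (N / k) - dirichletValue g β)| ≤
      Y * (M * (N : ℝ) ^ (-β)) := by
  refine (abs_sum_le_sum_abs _ _).trans ((sum_le_card_nsmul _ _ (M * (N : ℝ) ^ (-β)) ?_).trans ?_)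
  · intro k hk
    have hM := hg.nonneg
    have hkβ : 0 ≤ (k : ℝ) ^ (-β) := by positivity
    rw [abs_mul, abs_mul, abs_of_nonneg hkβ, abs_sub_comm]
    calc _ ≤ 1 * (k : ℝ) ^ (-β) * (M * ((N / k + 1 : ℕ) : ℝ) ^ (-β)) := by
          gcongr
          exacts [hf k, hg.abs_dirichletValue_sub_le hβ _]
      _ = M * ((k : ℝ) ^ (-β) * ((N / k + 1 : ℕ) : ℝ) ^ (-β)) := by ring
      _ ≤ _ := mul_le_mul_of_nonneg_left
        (rpow_neg_mul_rpow_neg_div_le hβ.le hN (mem_Ioc.1 hk).1.ne') hM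
  · rw [Nat.card_Ioc, Nat.sub_zero, nsmul_eq_mul]

theorem HasBoundedSums.abs_dirichletValue_sub_mul_sub_le (hf : HasBoundedSums f M)
    (hg : HasBoundedSums g M') (hβ : 0 < β) {Y : ℕ} (hY : Y ≠ 0) :
    |(dirichletValue f β - partialSum f β Y) * (dirichletValue g β - partialSum g β Y)| ≤
      M * M' * (Y * ((Y * Y : ℕ) : ℝ) ^ (-β)) := by
  have hY₀ : (0 : ℝ) < Y := by positivity
  have htail {a : ℕ → ℝ} {B : ℝ} (ha : HasBoundedSums a B) :
      |dirichletValue a β - partialSum a β Y| ≤ B * (Y : ℝ) ^ (-β) := by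
    refine (ha.abs_dirichletValue_sub_le hβ Y).trans (mul_le_mul_of_nonneg_left ?_ ha.nonneg)
    exact Real.rpow_le_rpow_of_nonpos hY₀ (by simp) (neg_nonpos.2 hβ.le)
  have hM := hf.nonneg
  have hM' := hg.nonneg
  rw [abs_mul]
  calc _ ≤ M * (Y : ℝ) ^ (-β) * (M' * (Y : ℝ) ^ (-β)) :=
        mul_le_mul (htail hf) (htail hg) (abs_nonneg _) ((abs_nonneg _).trans (htail hf))
    _ = M * M' * ((Y * Y : ℕ) : ℝ) ^ (-β) := by
      rw [Nat.cast_mul, Real.mul_rpow hY₀.le hY₀.le, mul_mul_mul_comm]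
    _ ≤ M * M' * (Y * ((Y * Y : ℕ) : ℝ) ^ (-β)) := by
      gcongr
      exact le_mul_of_one_le_left (by positivity) (Nat.one_le_cast.2 (Nat.pos_of_ne_zero hY))

theorem HasBoundedSums.abs_partialSum_convolution_sub_le (hf : HasBoundedSums f M)
    (hg : HasBoundedSums g M') (hM : 1 ≤ M) (hM' : 1 ≤ M') (hf₁ : ∀ m, |f m| ≤ 1)
    (hg₁ : ∀ m, |g m| ≤ 1) (hβ : 0 < β) {Y : ℕ} (hY : Y ≠ 0) :
    |partialSum (f ⍟ g) β (Y * Y) - dirichletValue f β * dirichletValue g β| ≤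
      3 * (M * M') * (Y * ((Y * Y : ℕ) : ℝ) ^ (-β)) := by
  set U : ℝ := Y * ((Y * Y : ℕ) : ℝ) ^ (-β)
  set Sf := ∑ k ∈ Ioc 0 Y,
    f k * (k : ℝ) ^ (-β) * (partialSum g β (Y * Y / k) - dirichletValue g β) with hSf
  set Sg := ∑ l ∈ Ioc 0 Y,
    g l * (l : ℝ) ^ (-β) * (partialSum f β (Y * Y / l) - dirichletValue f β) with hSg
  have hsplit : partialSum (f ⍟ g) β (Y * Y) - dirichletValue f β * dirichletValue g β =
      Sf + Sg -
        (dirichletValue f β - partialSum f β Y) * (dirichletValue g β - partialSum g β Y) := by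
    simp only [hSf, hSg, partialSum_convolution_mul, mul_sub, sum_sub_distrib, ← sum_mul]
    simp only [partialSum]
    ring
  have hprod := hf.abs_dirichletValue_sub_mul_sub_le hg hβ hY
  have hfU : |Sf| ≤ M' * U := mul_left_comm M' _ _ ▸
    hg.abs_sum_mul_partialSum_sub_le hf₁ hβ (Nat.mul_ne_zero hY hY) Y
  have hgU : |Sg| ≤ M * U := mul_left_comm M _ _ ▸
    hf.abs_sum_mul_partialSum_sub_le hg₁ hβ (Nat.mul_ne_zero hY hY) Y
  have hU₀ : 0 ≤ U := by positivity
  have hM'U : M' * U ≤ M * M' * U := mul_le_mul_of_nonneg_right (by nlinarith) hU₀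
  have hMU : M * U ≤ M * M' * U := mul_le_mul_of_nonneg_right (by nlinarith) hU₀
  rw [hsplit]
  linarith [abs_sub (Sf + Sg)
    ((dirichletValue f β - partialSum f β Y) * (dirichletValue g β - partialSum g β Y)),
    abs_add_le Sf Sg]

end Hyperbola

section PeriodicSums

open Finset

theorem sum_range_eq_zero_of_periodic {f : ℕ → ℝ} {q a : ℕ} {c : ℝ} (hf : f.Periodic q)
    (hq : q ≠ 0) (ha : q.Coprime a) (hc : c ≠ 1) (hmul : ∀ m, f (a * m) = c * f m) :
    ∑ m ∈ range q, f m = 0 := by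
  have hmaps : Set.MapsTo (fun m ↦ a * m % q) (range q) (range q) := fun m _ ↦
    mem_coe.2 (mem_range.2 (Nat.mod_lt _ (Nat.pos_of_ne_zero hq)))
  have hinj : Set.InjOn (fun m ↦ a * m % q) (range q) := fun m hm m' hm' h ↦
    (Nat.ModEq.cancel_left_of_coprime ha h).eq_of_lt_of_lt
      (mem_range.1 (mem_coe.1 hm)) (mem_range.1 (mem_coe.1 hm'))
  have hsum : ∑ m ∈ range q, c * f m = ∑ m ∈ range q, f m :=
    sum_nbij _ hmaps hinj (surjOn_of_injOn_of_card_le _ hmaps hinj le_rfl)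
      fun m _ ↦ by rw [hf.map_mod_nat, hmul]
  rw [← mul_sum] at hsum
  exact (mul_left_eq_self₀.1 hsum).resolve_left hc

theorem hasBoundedSums_of_periodic {f : ℕ → ℝ} {q : ℕ} (hf : f.Periodic q) (hq : q ≠ 0)
    (hsum : ∑ m ∈ range q, f m = 0) (hf₁ : ∀ m, |f m| ≤ 1) : HasBoundedSums f (2 * q) := by
  have hperiodic : (fun t ↦ ∑ m ∈ range t, f m).Periodic q := fun t ↦ by
    dsimp only
    rw [add_comm, sum_range_add, hsum, zero_add]
    exact sum_congr rfl fun m _ ↦ by rw [add_comm, hf]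
  have hbound (t : ℕ) : |∑ m ∈ range t, f m| ≤ q := by
    rw [← hperiodic.map_mod_nat t]
    refine (abs_sum_le_sum_abs _ _).trans ((sum_le_card_nsmul _ _ 1 fun m _ ↦ hf₁ m).trans ?_)
    rw [card_range, nsmul_one]
    exact_mod_cast (Nat.mod_lt t (Nat.pos_of_ne_zero hq)).le
  intro s t
  rcases le_or_gt t s with hts | hst
  · rw [Ioc_eq_empty (by lia), sum_empty, abs_zero]
    positivity
  · have : ∑ m ∈ Ioc s t, f m = ∑ m ∈ range (t + 1), f m - ∑ m ∈ range (s + 1), f m := by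
      rw [← sum_Ico_eq_sub _ (by lia)]
      exact sum_congr (by ext; simp) fun _ _ ↦ rfl
    rw [this]
    linarith [abs_sub (∑ m ∈ range (t + 1), f m) (∑ m ∈ range (s + 1), f m), hbound (t + 1),
      hbound (s + 1)]

theorem hasBoundedSums_of_antiperiodic {f : ℕ → ℝ} {q : ℕ} (hf : f.Antiperiodic q) (hq : q ≠ 0)
    (hf₁ : ∀ m, |f m| ≤ 1) : HasBoundedSums f (4 * q) := by
  have hsum : ∑ m ∈ range (2 * q), f m = 0 := by
    rw [two_mul, sum_range_add, ← sum_add_distrib]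
    exact sum_eq_zero fun m _ ↦ by rw [add_comm q, hf, add_neg_cancel]
  convert hasBoundedSums_of_periodic hf.periodic_two_mul (by lia) hsum hf₁ using 1
  push_cast
  ring

theorem periodic_quadChar (d : ℕ) : (quadChar d).Periodic d := fun m ↦ by
  rw [quadChar, quadChar, jacobiSym.mod_left, Nat.cast_add, Int.add_emod_right,
    ← jacobiSym.mod_left]

theorem hasBoundedSums_quadChar_mul {d₁ d : ℕ} (hd₁ : d₁ % 8 = 5) (hd : d₁.Coprime d)
    {h : ℕ → ℝ} (hh : h.Periodic d) (hh₁ : ∀ m, |h m| ≤ 1) :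
    HasBoundedSums (quadChar d₁ * h) (2 * (d₁ * d : ℕ)) := by
  obtain ⟨a, ha₁, ha⟩ := Nat.chineseRemainder hd 2 1
  have hq : d₁ * d ≠ 0 := mul_ne_zero (by lia) fun h₀ ↦ by
    rw [h₀, Nat.coprime_zero_right] at hd
    lia
  have hcop : (d₁ * d).Coprime a := by
    refine Nat.Coprime.mul_left (Nat.coprime_comm.1 ?_) (Nat.coprime_comm.1 ?_)
    · exact ha₁.gcd_eq.trans (Nat.coprime_two_left.2 (Nat.odd_iff.2 (by lia)))
    · exact ha.gcd_eq.trans (Nat.gcd_one_left d)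
  have hneg (m : ℕ) : (quadChar d₁ * h) (a * m) = -1 * (quadChar d₁ * h) m := by
    rw [Pi.mul_apply, Pi.mul_apply, quadChar_mul, ← (periodic_quadChar d₁).map_mod_nat a,
      ha₁, (periodic_quadChar d₁).map_mod_nat, quadChar_two hd₁, ← hh.map_mod_nat (a * m),
      (ha.mul_right m), one_mul, hh.map_mod_nat, mul_assoc]
  have hper₁ : (quadChar d₁).Periodic (d₁ * d) := by
    rw [mul_comm]
    exact (periodic_quadChar d₁).nsmul d
  have hper := hper₁.mul (hh.nsmul d₁)
  refine hasBoundedSums_of_periodic hper hq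
    (sum_range_eq_zero_of_periodic hper hq hcop (by norm_num) hneg) fun m ↦ ?_
  rw [Pi.mul_apply, abs_mul]
  exact mul_le_one₀ (abs_quadChar_le_one d₁ m) (abs_nonneg _) (hh₁ m)

theorem hasBoundedSums_quadChar {d : ℕ} (hd : d % 8 = 5) : HasBoundedSums (quadChar d) (2 * d) := by
  have := hasBoundedSums_quadChar_mul hd (Nat.coprime_one_right d) (h := 1) (fun _ ↦ rfl)
    fun _ ↦ by simp
  rwa [mul_one, mul_one] at this

/-- The coefficients of the alternating zeta function `1 - 2⁻ˢ + 3⁻ˢ - ⋯`. -/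
def altSign (m : ℕ) : ℝ := (-1) ^ (m + 1)

theorem abs_altSign_mul_quadChar_sq_le_one (d m : ℕ) : |(altSign * quadChar d ^ 2) m| ≤ 1 := by
  rw [Pi.mul_apply, altSign, abs_mul, abs_pow, abs_neg, abs_one, one_pow, one_mul, Pi.pow_apply,
    abs_pow]
  exact pow_le_one₀ (abs_nonneg _) (abs_quadChar_le_one d m)

theorem hasBoundedSums_altSign_mul_quadChar_sq {d : ℕ} (hd : Odd d) :
    HasBoundedSums (altSign * quadChar d ^ 2) (4 * d) := by
  refine hasBoundedSums_of_antiperiodic (fun m ↦ ?_) hd.pos.ne'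
    (abs_altSign_mul_quadChar_sq_le_one d)
  rw [Pi.mul_apply, Pi.mul_apply, Pi.pow_apply, Pi.pow_apply, periodic_quadChar d m, altSign,
    altSign, add_right_comm, pow_add, hd.neg_one_pow, mul_neg_one, neg_mul]

theorem quadChar_one_left : quadChar 1 = 1 := by
  ext m
  simp [quadChar]

theorem hasBoundedSums_altSign : HasBoundedSums altSign 4 := by
  simpa [quadChar_one_left] using hasBoundedSums_altSign_mul_quadChar_sq odd_one

end PeriodicSums

section CoprimalityRemoval

open Finset Filter Topology
open scoped LSeries.notation

variable {f : ℕ → ℝ} {β ℓ : ℝ}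

theorem mul_single_convolution_apply {p m : ℕ} (hm : m ≠ 0) (hf : ∀ m, f (p * m) = f p * f m) :
    f p * (Pi.single p 1 ⍟ f) m = if p ∣ m then f m else 0 := by
  rw [single_convolution_apply]
  split_ifs with h h' h'
  · rw [← hf, Nat.mul_div_cancel' h']
  · exact absurd (Nat.dvd_of_mem_divisors h) h'
  · exact absurd (Nat.mem_divisors.2 ⟨h', hm⟩) h
  · exact mul_zero _

theorem quadChar_sq_of_prime {p : ℕ} (hp : p.Prime) (m : ℕ) :
    quadChar p m ^ 2 = if p ∣ m then 0 else 1 := by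
  have := Fact.mk hp
  have hzero : quadChar p m = 0 ↔ p ∣ m := by
    rw [quadChar, ← jacobiSym.legendreSym.to_jacobiSym, Int.cast_eq_zero, legendreSym.eq_zero_iff,
      Int.cast_natCast, ZMod.natCast_eq_zero_iff]
  split_ifs with h
  · rw [hzero.2 h, zero_pow two_ne_zero]
  · exact sq_eq_one_iff.2 ((quadChar_trichotomy p m).resolve_left (mt hzero.1 h))

theorem quadChar_mul_left {a b : ℕ} (ha : a ≠ 0) (hb : b ≠ 0) :
    quadChar (a * b) = quadChar a * quadChar b := by
  ext m
  simp [quadChar, jacobiSym.mul_right' _ ha hb]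

theorem partialSum_mul_quadChar_sq {p : ℕ} (hp : p.Prime) (hf : ∀ m, f (p * m) = f p * f m)
    (β : ℝ) (X : ℕ) :
    partialSum (f * quadChar p ^ 2) β X =
      partialSum f β X - f p * ((p : ℝ) ^ (-β) * partialSum f β (X / p)) := by
  rw [← partialSum_single_convolution hp.ne_zero, partialSum, partialSum, partialSum, mul_sum,
    ← sum_sub_distrib]
  refine sum_congr rfl fun m hm ↦ ?_
  rw [← mul_assoc, mul_single_convolution_apply (mem_Ioc.1 hm).1.ne' hf, Pi.mul_apply,
    Pi.pow_apply, quadChar_sq_of_prime hp]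
  split_ifs <;> ring

theorem exists_tendsto_partialSum_mul_quadChar_sq (hβ : 0 ≤ β) {d : ℕ} (hd : d ≠ 0)
    (hf₁ : ∀ p ∈ d.primeFactors, |f p| ≤ 1)
    (hf : ∀ p ∈ d.primeFactors, ∀ m, f (p * m) = f p * f m)
    (h : Tendsto (partialSum f β) atTop (𝓝 ℓ)) :
    ∃ c : ℝ, 0 ≤ c ∧ Tendsto (partialSum (f * quadChar d ^ 2) β) atTop (𝓝 (c * ℓ)) := by
  induction d using induction_on_primes with
  | zero => exact absurd rfl hd
  | one => exact ⟨1, zero_le_one, by simpa [quadChar_one_left] using h⟩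
  | prime_mul p d hp ih =>
    have hd₀ := right_ne_zero_of_mul hd
    have hsub := Nat.primeFactors_mono (Dvd.intro_left p rfl) hd
    have hpd : p ∈ (p * d).primeFactors := Nat.mem_primeFactors.2 ⟨hp, Dvd.intro d rfl, hd⟩
    obtain ⟨c, hc, hlim⟩ := ih hd₀ (fun q hq ↦ hf₁ q (hsub hq)) fun q hq ↦ hf q (hsub hq)
    set g := f * quadChar d ^ 2 with hg
    have hgp (m : ℕ) : g (p * m) = g p * g m := by
      simp only [hg, Pi.mul_apply, Pi.pow_apply, hf p hpd, quadChar_mul]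
      ring
    have hgp₁ : g p * (p : ℝ) ^ (-β) ≤ 1 := by
      have hg₁ : |g p| ≤ 1 := by
        rw [hg, Pi.mul_apply, abs_mul, Pi.pow_apply, abs_pow]
        exact mul_le_one₀ (hf₁ p hpd) (by positivity)
          (pow_le_one₀ (abs_nonneg _) (abs_quadChar_le_one d p))
      exact mul_le_one₀ (le_of_abs_le hg₁) (by positivity)
        (Real.rpow_le_one_of_one_le_of_nonpos (Nat.one_le_cast.2 hp.one_le) (neg_nonpos.2 hβ))
    refine ⟨(1 - g p * (p : ℝ) ^ (-β)) * c, mul_nonneg (sub_nonneg.2 hgp₁) hc, ?_⟩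
    have hdiv := (hlim.comp (map_div_atTop_eq_nat p hp.pos).le).const_mul (g p * (p : ℝ) ^ (-β))
    have hstep : f * quadChar (p * d) ^ 2 = g * quadChar p ^ 2 := by
      rw [quadChar_mul_left hp.ne_zero hd₀, hg, mul_pow, mul_comm (quadChar p ^ 2), mul_assoc]
    rw [hstep, funext (partialSum_mul_quadChar_sq hp hgp β)]
    convert hlim.sub hdiv using 2
    · simp only [Function.comp_apply, mul_assoc]
    · ring

theorem exists_dirichletValue_mul_quadChar_sq {M : ℝ} (hβ : 0 < β) {d : ℕ} (hd : d ≠ 0)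
    (hf₁ : ∀ p ∈ d.primeFactors, |f p| ≤ 1)
    (hf : ∀ p ∈ d.primeFactors, ∀ m, f (p * m) = f p * f m) (hM : HasBoundedSums f M) :
    ∃ c : ℝ, 0 ≤ c ∧ dirichletValue (f * quadChar d ^ 2) β = c * dirichletValue f β := by
  obtain ⟨c, hc, h⟩ := exists_tendsto_partialSum_mul_quadChar_sq hβ.le hd hf₁ hf
    (hM.tendsto_partialSum hβ)
  exact ⟨c, hc, h.limUnder_eq⟩

end CoprimalityRemoval

section SpecialValues

open Finset Filter Topology
open scoped LSeries.notation

variable {d : ℕ} {β : ℝ}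

theorem dirichletValue_altSign_nonneg (hβ : 0 < β) : 0 ≤ dirichletValue altSign β := by
  have htendsto : Tendsto (fun n ↦ ∑ i ∈ range n, (-1) ^ i * ((i + 1 : ℕ) : ℝ) ^ (-β)) atTop
      (𝓝 (dirichletValue altSign β)) := by
    convert hasBoundedSums_altSign.tendsto_partialSum hβ using 2 with X
    rw [partialSum, ← Ico_add_one_add_one_eq_Ioc, ← sum_Ico_add', ← range_eq_Ico]
    exact sum_congr rfl fun i _ ↦ by simp [altSign, pow_succ]
  refine Antitone.alternating_series_le_tendsto htendsto (fun a b hab ↦ ?_) 0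
  exact Real.rpow_le_rpow_of_nonpos (by positivity) (by simpa using hab) (neg_nonpos.2 hβ.le)

theorem altSign_eq (m : ℕ) : altSign m = 1 - 2 * if 2 ∣ m then 1 else 0 := by
  rw [altSign]
  split_ifs with h
  · rw [(even_iff_two_dvd.2 h).add_one.neg_one_pow]
    norm_num
  · rw [(Nat.not_even_iff_odd.1 (mt even_iff_two_dvd.1 h)).add_one.neg_one_pow]
    norm_num

theorem dirichletValue_altSign_mul_quadChar_sq_nonneg (hd : Odd d) (hβ : 0 < β) :
    0 ≤ dirichletValue (altSign * quadChar d ^ 2) β := by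
  have hodd (p) (hp : p ∈ d.primeFactors) : ¬ 2 ∣ p := fun h ↦
    Nat.not_even_iff_odd.2 hd (even_iff_two_dvd.2 (h.trans (Nat.dvd_of_mem_primeFactors hp)))
  obtain ⟨c, hc, h⟩ := exists_dirichletValue_mul_quadChar_sq hβ hd.pos.ne' (f := altSign)
    (fun p hp ↦ by simp [altSign_eq, hodd p hp])
    (fun p hp m ↦ by simp [altSign_eq, hodd p hp, Nat.prime_two.dvd_mul]) hasBoundedSums_altSign
  exact h ▸ mul_nonneg hc (dirichletValue_altSign_nonneg hβ)

theorem partialSum_altSign_mul_quadChar_sq_convolution (hd : Odd d) (β : ℝ) (X : ℕ) :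
    partialSum ((altSign * quadChar d ^ 2) ⍟ quadChar d) β X =
      partialSum (idealCount d) β X -
        2 * ((2 : ℝ) ^ (-β) * partialSum (idealCount d) β (X / 2)) := by
  have h₂ : (quadChar d ^ 2) 2 = 1 := by
    rw [Pi.pow_apply, quadChar, ← Int.cast_pow, jacobiSym.sq_one, Int.cast_one]
    exact (Int.gcd_natCast_natCast 2 d).trans (Nat.coprime_two_left.2 hd)
  have hterm (k : ℕ) (hk : k ≠ 0) : (altSign * quadChar d ^ 2) k =
      (quadChar d ^ 2) k - 2 * (Pi.single 2 1 ⍟ quadChar d ^ 2) k := by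
    have := mul_single_convolution_apply hk (p := 2) (f := quadChar d ^ 2)
      fun m ↦ by simp only [Pi.pow_apply, quadChar_mul, mul_pow]
    rw [h₂, one_mul] at this
    rw [this, Pi.mul_apply, altSign_eq]
    split_ifs <;> ring
  have := partialSum_single_convolution two_ne_zero (idealCount d) β X
  rw [idealCount, ← convolution_assoc, Nat.cast_two] at this
  rw [idealCount, ← this]
  simp only [partialSum_convolution]
  rw [mul_sum, ← sum_sub_distrib]
  refine sum_congr rfl fun k hk ↦ ?_
  rw [hterm k (mem_Ioc.1 hk).1.ne']
  ring

theorem dirichletValue_quadChar_two_nonneg (hd : d % 8 = 5) :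
    0 ≤ dirichletValue (quadChar d) 2 := by
  refine ge_of_tendsto ((hasBoundedSums_quadChar hd).tendsto_partialSum two_pos) ?_
  filter_upwards [eventually_ge_atTop 1] with X hX
  suffices h : 1 / (X : ℝ) ≤ partialSum (quadChar d) 2 X from le_trans (by positivity) h
  induction X, hX using Nat.le_induction with
  | base => simp [partialSum, quadChar_one]
  | succ X hX ih =>
    have hX₀ : (0 : ℝ) < X := by positivity
    have hterm : -(1 / ((X : ℝ) + 1) ^ 2) ≤ quadChar d (X + 1) * ((X : ℝ) + 1) ^ (-2 : ℝ) := by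
      have hsq : ((X : ℝ) + 1) ^ (-2 : ℝ) = 1 / ((X : ℝ) + 1) ^ 2 := by
        rw [Real.rpow_neg (by positivity), Real.rpow_two, one_div]
      have hχ := (abs_le.1 (abs_quadChar_le_one d (X + 1))).1
      have : 0 ≤ 1 / ((X : ℝ) + 1) ^ 2 := by positivity
      rw [hsq]
      nlinarith
    have htelescope : 1 / ((X : ℝ) + 1) + 1 / ((X : ℝ) + 1) ^ 2 ≤ 1 / X := by
      rw [div_add_div _ _ (by positivity) (by positivity),
        div_le_div_iff₀ (by positivity) (by positivity)]
      nlinarith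
    rw [partialSum] at ih ⊢
    rw [sum_Ioc_succ_top (by lia), Nat.cast_succ X]
    linarith

end SpecialValues

section DivisorBound

open Finset

theorem add_one_le_mul_pow {ε x : ℝ} (hε : 0 < ε) (hx : 1 + ε / 2 ≤ x) (a : ℕ) :
    (a : ℝ) + 1 ≤ (1 + 2 / ε) * x ^ a :=
  calc (a : ℝ) + 1 ≤ (1 + 2 / ε) * (1 + a * (ε / 2)) := by
        have : (1 + 2 / ε) * (1 + a * (ε / 2)) = a + 1 + (a * (ε / 2) + 2 / ε) := by
          field_simp
          ring
        rw [this]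
        exact le_add_of_nonneg_right (by positivity)
    _ ≤ (1 + 2 / ε) * (1 + ε / 2) ^ a := by
        gcongr
        exact one_add_mul_le_pow (by linarith) a
    _ ≤ (1 + 2 / ε) * x ^ a := by gcongr

theorem add_one_le_ite_mul_rpow {ε : ℝ} (hε : 0 < ε) {p : ℕ} (hp : 2 ≤ p) (a : ℕ) :
    (a : ℝ) + 1 ≤ (if (p : ℝ) ^ ε < 2 then 1 + 2 / ε else 1) * ((p : ℝ) ^ a) ^ ε := by
  rw [← Real.rpow_natCast_mul p.cast_nonneg, mul_comm (a : ℝ), Real.rpow_mul_natCast p.cast_nonneg]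
  split_ifs with h
  · refine add_one_le_mul_pow hε ?_ a
    calc 1 + ε / 2 ≤ Real.log 2 * ε + 1 := by nlinarith [Real.log_two_gt_d9]
      _ ≤ 2 ^ ε := by
        rw [Real.rpow_def_of_pos two_pos]
        exact Real.add_one_le_exp _
      _ ≤ (p : ℝ) ^ ε := Real.rpow_le_rpow two_pos.le (mod_cast hp) hε.le
  · calc (a : ℝ) + 1 ≤ 2 ^ a := mod_cast Nat.lt_two_pow_self
      _ ≤ 1 * ((p : ℝ) ^ ε) ^ a := by
        rw [one_mul]
        gcongr
        exact not_lt.1 h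

theorem card_divisors_le_mul_rpow {ε : ℝ} (hε : 0 < ε) {m : ℕ} (hm : m ≠ 0) :
    (#m.divisors : ℝ) ≤ (1 + 2 / ε) ^ ⌈(2 : ℝ) ^ ε⁻¹⌉₊ * (m : ℝ) ^ ε := by
  have hsmall : #{p ∈ m.primeFactors | ((p : ℕ) : ℝ) ^ ε < 2} ≤ ⌈(2 : ℝ) ^ ε⁻¹⌉₊ := by
    refine (card_le_card fun p hp ↦ ?_).trans_eq (card_range _)
    rw [mem_range, Nat.lt_ceil, Real.lt_rpow_inv_iff_of_pos p.cast_nonneg two_pos.le hε]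
    exact (mem_filter.1 hp).2
  have hprod : ∏ p ∈ m.primeFactors, (p : ℝ) ^ m.factorization p = m :=
    mod_cast Nat.prod_factorization_pow_eq_self hm
  calc (#m.divisors : ℝ) = ∏ p ∈ m.primeFactors, ((m.factorization p : ℝ) + 1) := by
        rw [Nat.card_divisors hm]
        push_cast
        rfl
    _ ≤ ∏ p ∈ m.primeFactors, (if (p : ℝ) ^ ε < 2 then 1 + 2 / ε else 1) *
          ((p : ℝ) ^ m.factorization p) ^ ε :=
        prod_le_prod (fun p _ ↦ by positivity) fun p hp ↦
          add_one_le_ite_mul_rpow hε (Nat.prime_of_mem_primeFactors hp).two_le _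
    _ = (1 + 2 / ε) ^ #{p ∈ m.primeFactors | ((p : ℕ) : ℝ) ^ ε < 2} * (m : ℝ) ^ ε := by
        rw [prod_mul_distrib, Real.finsetProd_rpow _ _ fun p _ ↦ by positivity, hprod, prod_ite,
          prod_const, prod_const_one, mul_one]
    _ ≤ (1 + 2 / ε) ^ ⌈(2 : ℝ) ^ ε⁻¹⌉₊ * (m : ℝ) ^ ε := by
        gcongr
        exact le_add_of_nonneg_right (by positivity)

theorem sum_Ioc_rpow_sub_one_le {s : ℝ} (hs : 0 < s) (hs₁ : s ≤ 1) (N : ℕ) :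
    ∑ a ∈ Ioc 0 N, (a : ℝ) ^ (s - 1) ≤ (N : ℝ) ^ s / s := by
  induction N with
  | zero => simp [hs.ne']
  | succ N ih =>
    have hN : (0 : ℝ) < N + 1 := by positivity
    have hstep : (N : ℝ) ^ s ≤ ((N : ℝ) + 1) ^ s - s * ((N : ℝ) + 1) ^ (s - 1) :=
      calc (N : ℝ) ^ s = ((N : ℝ) + 1) ^ s * (1 + -((N : ℝ) + 1)⁻¹) ^ s := by
            rw [← Real.mul_rpow hN.le]
            · congr 1
              field_simp
              ring
            · rw [← sub_eq_add_neg, sub_nonneg]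
              exact inv_le_one_of_one_le₀ (by simp)
        _ ≤ ((N : ℝ) + 1) ^ s * (1 + s * -((N : ℝ) + 1)⁻¹) := by
            gcongr
            refine rpow_one_add_le_one_add_mul_self ?_ hs.le hs₁
            exact neg_le_neg (inv_le_one_of_one_le₀ (by simp))
        _ = ((N : ℝ) + 1) ^ s - s * ((N : ℝ) + 1) ^ (s - 1) := by
            rw [Real.rpow_sub_one hN.ne']
            ring
    rw [sum_Ioc_succ_top N.zero_le, Nat.cast_add_one]
    calc _ ≤ (N : ℝ) ^ s / s + ((N : ℝ) + 1) ^ (s - 1) := by gcongr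
      _ ≤ ((N : ℝ) + 1) ^ s / s := by
        rw [← le_sub_iff_add_le, div_le_iff₀ hs, sub_mul, div_mul_cancel₀ _ hs.ne']
        linarith

end DivisorBound

section SparseSums

open Finset Filter Topology

variable {n d : ℕ} {e : ℤˣ} {s β : ℝ}

theorem rpow_sub_one_le_mul_rpow {c x y : ℝ} (hs : 0 ≤ s) (hs₁ : s ≤ 1) (hc : 1 ≤ c) (hx : 0 < x)
    (hxy : x ≤ c * y) : y ^ (s - 1) ≤ c * x ^ (s - 1) := by
  have hc₀ : 0 < c := one_pos.trans_le hc
  calc y ^ (s - 1) ≤ (c⁻¹ * x) ^ (s - 1) :=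
        Real.rpow_le_rpow_of_nonpos (by positivity) ((inv_mul_le_iff₀ hc₀).2 hxy) (by linarith)
    _ = c ^ (1 - s) * x ^ (s - 1) := by
        rw [Real.mul_rpow (by positivity) hx.le, Real.inv_rpow hc₀.le, ← Real.rpow_neg hc₀.le,
          neg_sub]
    _ ≤ c * x ^ (s - 1) := by
        gcongr
        exact Real.rpow_le_self_of_one_le hc (by linarith)

theorem IsBalanced.exists_natAbs_eq {m : ℕ} (hn : 3 ≤ n) (h : IsBalanced n e m) :
    ∃ (σ : ℤˣ) (a b : ℕ), a ∈ Ioc 0 (2 * m) ∧ b ∈ Ioc 0 (2 * m) ∧ n * (a * b) ≤ 6 * m ∧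
      ((a : ℤ) ^ 2 + σ * n * a * b + e * b ^ 2).natAbs = m := by
  obtain ⟨σ, a, b, ha, hb, hm, hab⟩ := h
  obtain ⟨k, rfl⟩ := Nat.exists_eq_add_of_le hn
  have hab' : (1 + k) * (a * b) ≤ 2 * m := by
    zify
    convert hab using 2
    push_cast
    ring
  have hle : a * b ≤ 2 * m := (Nat.le_mul_of_pos_left _ (by lia)).trans hab'
  refine ⟨σ, a, b, mem_Ioc.2 ⟨ha, (Nat.le_mul_of_pos_right a hb).trans hle⟩,
    mem_Ioc.2 ⟨hb, (Nat.le_mul_of_pos_left b ha).trans hle⟩, by nlinarith, ?_⟩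
  exact_mod_cast (Int.abs_eq_natAbs _).symm.trans hm

/-- Each balanced norm `m` comes from a triple `(σ, a, b)` with `a b` at most about `m / n`, and
these triples determine `m`; so the sum over `m` gains the factor `n ^ (s - 1)`. -/
theorem sum_rpow_le_of_isBalanced {S : Finset ℕ} {X : ℕ} (hn : 3 ≤ n) (hs : 0 < s) (hs₁ : s ≤ 1)
    (hS : ∀ m ∈ S, m ≤ X ∧ IsBalanced n e m) :
    ∑ m ∈ S, (m : ℝ) ^ (s - 1) ≤ 12 * (n : ℝ) ^ (s - 1) * (((2 * X : ℕ) : ℝ) ^ s / s) ^ 2 := by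
  set v : ℤˣ × ℕ × ℕ → ℕ := fun t ↦
    ((t.2.1 : ℤ) ^ 2 + t.1 * n * t.2.1 * t.2.2 + e * t.2.2 ^ 2).natAbs
  set B : Finset (ℤˣ × ℕ × ℕ) := univ ×ˢ Ioc 0 (2 * X) ×ˢ Ioc 0 (2 * X) with hB
  set T := {t ∈ B | n * (t.2.1 * t.2.2) ≤ 6 * v t} with hT
  have hST : S ⊆ T.image v := fun m hm ↦ by
    obtain ⟨σ, a, b, ha, hb, hab, rfl⟩ := (hS m hm).2.exists_natAbs_eq hn
    have hX : Ioc 0 _ ⊆ Ioc 0 (2 * X) :=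
      Ioc_subset_Ioc_right (Nat.mul_le_mul_left 2 (hS _ hm).1)
    exact mem_image.2 ⟨(σ, a, b), mem_filter.2 ⟨mem_product.2 ⟨mem_univ σ,
      mem_product.2 ⟨hX ha, hX hb⟩⟩, hab⟩, rfl⟩
  have hterm : ∀ t ∈ T, (v t : ℝ) ^ (s - 1) ≤
      6 * (n : ℝ) ^ (s - 1) * ((t.2.1 : ℝ) ^ (s - 1) * (t.2.2 : ℝ) ^ (s - 1)) := fun t ht ↦ by
    simp only [hT, hB, mem_filter, mem_product, mem_Ioc] at ht
    obtain ⟨⟨-, ⟨ha, -⟩, hb, -⟩, hab⟩ := ht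
    have : 0 < n * (t.2.1 * t.2.2) := by positivity
    rw [mul_assoc, ← Real.mul_rpow (by positivity) (by positivity),
      ← Real.mul_rpow (by positivity) (by positivity)]
    exact rpow_sub_one_le_mul_rpow hs.le hs₁ (by norm_num) (mod_cast this) (mod_cast hab)
  calc ∑ m ∈ S, (m : ℝ) ^ (s - 1)
      ≤ ∑ m ∈ T.image v, (m : ℝ) ^ (s - 1) :=
        sum_le_sum_of_subset_of_nonneg hST fun m _ _ ↦ by positivity
    _ ≤ ∑ t ∈ T, (v t : ℝ) ^ (s - 1) := sum_image_le_of_nonneg fun m _ ↦ by positivity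
    _ ≤ ∑ t ∈ T, 6 * (n : ℝ) ^ (s - 1) * ((t.2.1 : ℝ) ^ (s - 1) * (t.2.2 : ℝ) ^ (s - 1)) :=
        sum_le_sum hterm
    _ ≤ ∑ t ∈ B, 6 * (n : ℝ) ^ (s - 1) * ((t.2.1 : ℝ) ^ (s - 1) * (t.2.2 : ℝ) ^ (s - 1)) :=
        sum_le_sum_of_subset_of_nonneg (filter_subset _ _) fun t _ _ ↦ by positivity
    _ = 12 * (n : ℝ) ^ (s - 1) * (∑ a ∈ Ioc 0 (2 * X), (a : ℝ) ^ (s - 1)) ^ 2 := by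
        simp only [hB, ← mul_sum, sum_product, sum_const, card_univ, Fintype.card_units_int,
          ← sum_mul, sq, nsmul_eq_mul]
        ring
    _ ≤ 12 * (n : ℝ) ^ (s - 1) * (((2 * X : ℕ) : ℝ) ^ s / s) ^ 2 := by
        gcongr
        exact sum_Ioc_rpow_sub_one_le hs hs₁ _

theorem sum_isSquare_rpow_le (hs : 0 ≤ s) (hs₁ : s ≤ 1) (Y : ℕ) :
    ∑ m ∈ Ioc (Y * Y / 2) (Y * Y) with IsSquare m, (m : ℝ) ^ (s - 1) ≤
      2 * (Y * ((Y * Y : ℕ) : ℝ) ^ (s - 1)) := by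
  have hcard : #{m ∈ Ioc (Y * Y / 2) (Y * Y) | IsSquare m} ≤ Y := by
    refine (card_le_card (t := (Ioc 0 Y).image fun r ↦ r * r) fun m hm ↦ ?_).trans
      (card_image_le.trans_eq (Nat.card_Ioc 0 Y))
    obtain ⟨hm, r, rfl⟩ := mem_filter.1 hm
    obtain ⟨hr, hrY⟩ := mem_Ioc.1 hm
    have hr₀ : 0 < r := Nat.pos_of_ne_zero <| by rintro rfl; simp at hr
    exact mem_image_of_mem _ (mem_Ioc.2 ⟨hr₀, Nat.mul_self_le_mul_self_iff.1 hrY⟩)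
  calc _ ≤ #{m ∈ Ioc (Y * Y / 2) (Y * Y) | IsSquare m} • (2 * ((Y * Y : ℕ) : ℝ) ^ (s - 1)) := by
        refine sum_le_card_nsmul _ _ _ fun m hm ↦ ?_
        obtain ⟨hm, hmY⟩ := mem_Ioc.1 (mem_filter.1 hm).1
        refine rpow_sub_one_le_mul_rpow hs hs₁ one_le_two ?_ (mod_cast (by omega : Y * Y ≤ 2 * m))
        exact mod_cast (Nat.zero_le _).trans_lt hm |>.trans_le hmY
    _ ≤ 2 * (Y * ((Y * Y : ℕ) : ℝ) ^ (s - 1)) := by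
        rw [nsmul_eq_mul, mul_left_comm]
        gcongr

theorem exists_idealCount_mul_rpow_neg_le (hs : 0 < s) :
    ∃ C : ℝ, 0 ≤ C ∧ ∀ d β, 1 - s / 2 ≤ β → ∀ m : ℕ, m ≠ 0 →
      idealCount d m * (m : ℝ) ^ (-β) ≤ C * (m : ℝ) ^ (s - 1) := by
  refine ⟨(1 + 2 / (s / 2)) ^ ⌈(2 : ℝ) ^ (s / 2)⁻¹⌉₊, by positivity, fun d β hβ m hm ↦ ?_⟩
  have hm₁ : (1 : ℝ) ≤ m := mod_cast Nat.one_le_iff_ne_zero.2 hm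
  calc idealCount d m * (m : ℝ) ^ (-β)
      ≤ (1 + 2 / (s / 2)) ^ ⌈(2 : ℝ) ^ (s / 2)⁻¹⌉₊ * (m : ℝ) ^ (s / 2) * (m : ℝ) ^ (s / 2 - 1) := by
        gcongr
        · exact (idealCount_le_card_divisors d m).trans (card_divisors_le_mul_rpow (half_pos hs) hm)
        · linarith
    _ = _ := by
        rw [mul_assoc, ← Real.rpow_add (one_pos.trans_le hm₁)]
        ring_nf

end SparseSums

section Repulsion

open Finset Filter Topology
open scoped LSeries.notation

variable {n d d₁ X Y : ℕ} {e : ℤˣ} {β : ℝ}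

theorem pow_six_mul_rpow_le {t : ℝ} (hn : 1 ≤ n) (ht : t ≤ -(9 / 10)) :
    ((n ^ 6 : ℕ) : ℝ) * ((n ^ 6 * n ^ 6 : ℕ) : ℝ) ^ t ≤ (n : ℝ) ^ (-(9 / 2) : ℝ) := by
  have hn₁ : (1 : ℝ) ≤ n := mod_cast hn
  rw [← pow_add, Nat.cast_pow, Nat.cast_pow, ← Real.rpow_natCast_mul n.cast_nonneg,
    ← Real.rpow_natCast, ← Real.rpow_add (by positivity)]
  refine Real.rpow_le_rpow_of_exponent_le hn₁ ?_
  push_cast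
  linarith

theorem SparseNorms.disc_sq_mul_le (h : SparseNorms n e d) (hβ : 199 / 200 ≤ β) :
    (d : ℝ) ^ 2 * (((n ^ 6 : ℕ) : ℝ) * ((n ^ 6 * n ^ 6 : ℕ) : ℝ) ^ (-β)) ≤
      4 * (n : ℝ) ^ (-(1 / 2) : ℝ) := by
  have hn : 1 ≤ n := by linarith [h.three_le]
  calc _ ≤ (2 * (n : ℝ) ^ 2) ^ 2 * (n : ℝ) ^ (-(9 / 2) : ℝ) := by
        gcongr
        · exact mod_cast h.disc_le
        · exact pow_six_mul_rpow_le hn (by linarith)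
    _ = 4 * ((n : ℝ) ^ (4 : ℕ) * (n : ℝ) ^ (-(9 / 2) : ℝ)) := by ring
    _ = 4 * (n : ℝ) ^ (-(1 / 2) : ℝ) := by
        rw [← Real.rpow_natCast, ← Real.rpow_add (by positivity)]
        norm_num

theorem rpow_mul_sq_le (hn : 2 ≤ n) :
    12 * (n : ℝ) ^ (1 / 100 - 1 : ℝ) *
        (((2 * (n ^ 6 * n ^ 6) : ℕ) : ℝ) ^ (1 / 100 : ℝ) / (1 / 100)) ^ 2 ≤
      12 * 100 ^ 2 * (n : ℝ) ^ (-(1 / 2) : ℝ) := by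
  have hn₂ : (2 : ℝ) ≤ n := mod_cast hn
  have hX : ((2 * (n ^ 6 * n ^ 6) : ℕ) : ℝ) ^ (1 / 100 : ℝ) ≤ (n : ℝ) ^ (13 / 100 : ℝ) :=
    calc _ ≤ ((n : ℝ) ^ 13) ^ (1 / 100 : ℝ) := by
          gcongr
          rw [pow_succ' _ 12, ← pow_add]
          push_cast
          gcongr
      _ = (n : ℝ) ^ (13 / 100 : ℝ) := by
          rw [← Real.rpow_natCast_mul n.cast_nonneg]
          norm_num
  have hexp : (n : ℝ) ^ (1 / 100 - 1 : ℝ) * ((n : ℝ) ^ (13 / 100 : ℝ)) ^ 2 ≤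
      (n : ℝ) ^ (-(1 / 2) : ℝ) := by
    rw [← Real.rpow_mul_natCast n.cast_nonneg, ← Real.rpow_add (by linarith)]
    exact Real.rpow_le_rpow_of_exponent_le (by linarith) (by norm_num)
  calc _ ≤ 12 * (n : ℝ) ^ (1 / 100 - 1 : ℝ) * ((n : ℝ) ^ (13 / 100 : ℝ) / (1 / 100)) ^ 2 := by
        gcongr
    _ = 12 * 100 ^ 2 * ((n : ℝ) ^ (1 / 100 - 1 : ℝ) * ((n : ℝ) ^ (13 / 100 : ℝ)) ^ 2) := by ring
    _ ≤ 12 * 100 ^ 2 * (n : ℝ) ^ (-(1 / 2) : ℝ) := by gcongr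

theorem exists_sum_not_isSquare_idealCount_le :
    ∃ C : ℝ, 0 ≤ C ∧ ∀ n e d, SparseNorms n e d → ∀ β : ℝ, 199 / 200 ≤ β →
      ∑ m ∈ Ioc 0 (n ^ 6 * n ^ 6) with ¬IsSquare m, idealCount d m * (m : ℝ) ^ (-β) ≤
        C * (n : ℝ) ^ (-(1 / 2) : ℝ) := by
  obtain ⟨C, hC, hcoeff⟩ := exists_idealCount_mul_rpow_neg_le (s := 1 / 100) (by norm_num)
  refine ⟨C * (12 * 100 ^ 2), by positivity, fun n e d h β hβ ↦ ?_⟩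
  set X := n ^ 6 * n ^ 6
  set S := {m ∈ {m ∈ Ioc 0 X | ¬IsSquare m} | idealCount d m ≠ 0} with hS
  calc _ = ∑ m ∈ S, idealCount d m * (m : ℝ) ^ (-β) :=
        (sum_filter_of_ne fun m _ hm ↦ left_ne_zero_of_mul hm).symm
    _ ≤ ∑ m ∈ S, C * (m : ℝ) ^ (1 / 100 - 1 : ℝ) := by
        refine sum_le_sum fun m hm ↦ hcoeff d β (by linarith) m ?_
        rintro rfl
        simp [hS] at hm
    _ ≤ C * (12 * (n : ℝ) ^ (1 / 100 - 1 : ℝ) *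
          (((2 * X : ℕ) : ℝ) ^ (1 / 100 : ℝ) / (1 / 100)) ^ 2) := by
        rw [← mul_sum]
        gcongr
        refine sum_rpow_le_of_isBalanced (e := e) h.three_le (by norm_num) (by norm_num)
          fun m hm ↦ ?_
        simp only [hS, mem_filter, mem_Ioc] at hm
        exact ⟨hm.1.1.2, (h.isSquare_or_isBalanced m hm.2).resolve_left hm.1.2⟩
    _ ≤ C * (12 * 100 ^ 2) * (n : ℝ) ^ (-(1 / 2) : ℝ) := by
        rw [mul_assoc C]
        exact mul_le_mul_of_nonneg_left (rpow_mul_sq_le (by linarith [h.three_le])) hC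

theorem exists_sum_isSquare_idealCount_le :
    ∃ C : ℝ, 0 ≤ C ∧ ∀ n d : ℕ, 1 ≤ n → ∀ β : ℝ, 199 / 200 ≤ β →
      ∑ m ∈ Ioc (n ^ 6 * n ^ 6 / 2) (n ^ 6 * n ^ 6) with IsSquare m,
        idealCount d m * (m : ℝ) ^ (-β) ≤ C * (n : ℝ) ^ (-(1 / 2) : ℝ) := by
  obtain ⟨C, hC, hcoeff⟩ := exists_idealCount_mul_rpow_neg_le (s := 1 / 100) (by norm_num)
  refine ⟨C * 2, by positivity, fun n d hn β hβ ↦ ?_⟩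
  calc _ ≤ ∑ m ∈ Ioc (n ^ 6 * n ^ 6 / 2) (n ^ 6 * n ^ 6) with IsSquare m,
          C * (m : ℝ) ^ (1 / 100 - 1 : ℝ) := by
        refine sum_le_sum fun m hm ↦ hcoeff d β (by linarith) m ?_
        rintro rfl
        simp at hm
    _ ≤ C * (2 * ((n ^ 6 : ℕ) * ((n ^ 6 * n ^ 6 : ℕ) : ℝ) ^ (1 / 100 - 1 : ℝ))) := by
        rw [← mul_sum]
        gcongr
        exact sum_isSquare_rpow_le (by norm_num) (by norm_num) _
    _ ≤ C * (2 * (n : ℝ) ^ (-(1 / 2) : ℝ)) := by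
        gcongr
        refine (pow_six_mul_rpow_le hn (by norm_num)).trans ?_
        exact Real.rpow_le_rpow_of_exponent_le (mod_cast hn) (by norm_num)
    _ = C * 2 * (n : ℝ) ^ (-(1 / 2) : ℝ) := by ring

theorem exists_partialSum_idealCount_sub_le :
    ∃ C : ℝ, ∀ n e d, SparseNorms n e d → ∀ β : ℝ, 199 / 200 ≤ β →
      partialSum (idealCount d) β (n ^ 6 * n ^ 6) -
        partialSum (idealCount d) β (n ^ 6 * n ^ 6 / 2) ≤ C * (n : ℝ) ^ (-(1 / 2) : ℝ) := by
  obtain ⟨C₁, -, h₁⟩ := exists_sum_isSquare_idealCount_le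
  obtain ⟨C₂, -, h₂⟩ := exists_sum_not_isSquare_idealCount_le
  refine ⟨C₁ + C₂, fun n e d h β hβ ↦ ?_⟩
  rw [partialSum_sub_partialSum _ _ (Nat.div_le_self _ 2),
    ← sum_filter_add_sum_filter_not _ fun m ↦ IsSquare m, add_mul]
  refine add_le_add (h₁ n d (by linarith [h.three_le]) β hβ) (le_trans ?_ (h₂ n e d h β hβ))
  exact sum_le_sum_of_subset_of_nonneg
    (filter_subset_filter _ (Ioc_subset_Ioc_left (Nat.zero_le _)))
    fun m _ _ ↦ mul_nonneg (idealCount_nonneg d m) (by positivity)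

theorem one_le_partialSum_idealCount (d : ℕ) (β : ℝ) (hX : X ≠ 0) :
    1 ≤ partialSum (idealCount d) β X := by
  refine le_of_eq_of_le ?_ (single_le_sum (a := 1) (fun m _ ↦ mul_nonneg (idealCount_nonneg d m)
    (by positivity)) (mem_Ioc.2 ⟨one_pos, Nat.one_le_iff_ne_zero.2 hX⟩))
  simp [idealCount_one]

theorem two_rpow_one_sub_sub_one_le (hd : d % 8 = 5) (hβ : 0 < β) (hβ₁ : β ≤ 1) (hY : 2 ≤ Y)
    (hL : 0 ≤ dirichletValue (quadChar d) β) :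
    2 ^ (1 - β) - 1 ≤ partialSum (idealCount d) β (Y * Y) -
      partialSum (idealCount d) β (Y * Y / 2) +
        24 * (d ^ 2 * (Y * ((Y * Y : ℕ) : ℝ) ^ (-β))) := by
  have hodd : Odd d := Nat.odd_iff.2 (by lia)
  have hd₁ : (1 : ℝ) ≤ d := mod_cast (by lia : 1 ≤ d)
  have hβ₂ : (1 : ℝ) ≤ 2 ^ (1 - β) := Real.one_le_rpow one_le_two (by linarith)
  have hS : 1 ≤ partialSum (idealCount d) β (Y * Y / 2) :=
    one_le_partialSum_idealCount d β (by have := Nat.mul_le_mul hY hY; lia)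
  have herr := (hasBoundedSums_altSign_mul_quadChar_sq hodd).abs_partialSum_convolution_sub_le
    (hasBoundedSums_quadChar hd) (by linarith) (by linarith)
    (abs_altSign_mul_quadChar_sq_le_one d) (abs_quadChar_le_one d) hβ (by lia : Y ≠ 0)
  rw [partialSum_altSign_mul_quadChar_sq_convolution hodd, ← mul_assoc 2] at herr
  have hpow : (2 : ℝ) * 2 ^ (-β) = 2 ^ (1 - β) := by
    rw [sub_eq_add_neg, Real.rpow_add two_pos, Real.rpow_one]
  have hprod := mul_nonneg (dirichletValue_altSign_mul_quadChar_sq_nonneg hodd hβ) hL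
  rw [hpow] at herr
  nlinarith [(abs_le.1 herr).1, mul_nonneg (sub_nonneg.2 hβ₂) (sub_nonneg.2 hS)]

theorem eventually_mul_rpow_neg_lt (C : ℝ) {κ : ℝ} (hκ : 0 < κ) :
    ∀ᶠ n : ℕ in atTop, C * (n : ℝ) ^ (-(1 / 2) : ℝ) < κ := by
  have h : Tendsto (fun n : ℕ ↦ C * (n : ℝ) ^ (-(1 / 2) : ℝ)) atTop (𝓝 (C * 0)) :=
    ((tendsto_rpow_neg_atTop one_half_pos).comp tendsto_natCast_atTop_atTop).const_mul C
  exact h.eventually_lt_const (by simpa using hκ)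

theorem eventually_dirichletValue_quadChar_neg :
    ∀ᶠ n in atTop, ∀ e d, SparseNorms n e d → dirichletValue (quadChar d) (199 / 200) < 0 := by
  obtain ⟨C, hC⟩ := exists_partialSum_idealCount_sub_le
  have hκ : (0 : ℝ) < 2 ^ (1 - 199 / 200 : ℝ) - 1 :=
    sub_pos.2 (Real.one_lt_rpow one_lt_two (by norm_num))
  filter_upwards [eventually_mul_rpow_neg_lt (C + 96) hκ] with n hn e d h
  by_contra! hL
  have hle := two_rpow_one_sub_sub_one_le h.disc_mod_eight (by norm_num) (by norm_num)
    (h.three_le.trans (Nat.le_self_pow (by norm_num : 6 ≠ 0) n) |>.trans' (by norm_num)) hL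
  linarith [hC n e d h _ le_rfl, h.disc_sq_mul_le le_rfl]

theorem one_sub_sum_le_partialSum_quadChar_mul_idealCount (d₁ d : ℕ) (β : ℝ) (hX : X ≠ 0) :
    1 - ∑ m ∈ Ioc 0 X with ¬IsSquare m, idealCount d m * (m : ℝ) ^ (-β) ≤
      partialSum (quadChar d₁ * idealCount d) β X := by
  have hterm : ∀ m : ℕ, 0 ≤ idealCount d m * (m : ℝ) ^ (-β) := fun m ↦
    mul_nonneg (idealCount_nonneg d m) (by positivity)
  have hsquare : 1 ≤ ∑ m ∈ Ioc 0 X with IsSquare m,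
      (quadChar d₁ * idealCount d) m * (m : ℝ) ^ (-β) := by
    refine le_of_eq_of_le ?_ (single_le_sum (a := 1) (fun m hm ↦ ?_)
      (mem_filter.2 ⟨mem_Ioc.2 ⟨one_pos, Nat.one_le_iff_ne_zero.2 hX⟩, IsSquare.one⟩))
    · simp [quadChar_one, idealCount_one]
    · obtain ⟨r, rfl⟩ := (mem_filter.1 hm).2
      rw [Pi.mul_apply, quadChar_mul, mul_assoc]
      exact mul_nonneg (mul_self_nonneg _) (hterm _)
  have hnonsquare : -∑ m ∈ Ioc 0 X with ¬IsSquare m, idealCount d m * (m : ℝ) ^ (-β) ≤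
      ∑ m ∈ Ioc 0 X with ¬IsSquare m, (quadChar d₁ * idealCount d) m * (m : ℝ) ^ (-β) := by
    rw [← sum_neg_distrib]
    refine sum_le_sum fun m _ ↦ ?_
    rw [Pi.mul_apply, mul_assoc, neg_eq_neg_one_mul]
    exact mul_le_mul_of_nonneg_right (abs_le.1 (abs_quadChar_le_one d₁ m)).1 (hterm m)
  rw [sub_le_iff_le_add, partialSum, ← sum_filter_add_sum_filter_not (Ioc 0 X) (IsSquare ·)]
  linarith

theorem partialSum_quadChar_mul_idealCount_le (hd₁ : d₁ % 8 = 5) (hd : d ≠ 0)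
    (hdd : d₁.Coprime d) (hβ : 0 < β) (hL : dirichletValue (quadChar d₁) β = 0) (hY : Y ≠ 0) :
    partialSum (quadChar d₁ * idealCount d) β (Y * Y) ≤
      12 * d₁ ^ 2 * (d ^ 2 * (Y * ((Y * Y : ℕ) : ℝ) ^ (-β))) := by
  have hM : (1 : ℝ) ≤ 2 * (d₁ * d : ℕ) := by
    have : 1 ≤ d₁ * d := Nat.mul_pos (by lia) (by lia)
    exact mod_cast (by lia : 1 ≤ 2 * (d₁ * d))
  have hsq : ∀ m, |(quadChar d ^ 2) m| ≤ 1 := fun m ↦ by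
    rw [Pi.pow_apply, abs_pow]
    exact pow_le_one₀ (abs_nonneg _) (abs_quadChar_le_one d m)
  have hmul : ∀ {h : ℕ → ℝ}, (∀ m, |h m| ≤ 1) → ∀ m, |(quadChar d₁ * h) m| ≤ 1 := fun hh m ↦ by
    rw [Pi.mul_apply, abs_mul]
    exact mul_le_one₀ (abs_quadChar_le_one d₁ m) (abs_nonneg _) (hh m)
  have hperiodic : (quadChar d ^ 2).Periodic d := fun m ↦ by
    rw [Pi.pow_apply, Pi.pow_apply, periodic_quadChar]
  obtain ⟨c, -, hc⟩ := exists_dirichletValue_mul_quadChar_sq hβ hd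
    (fun p _ ↦ abs_quadChar_le_one d₁ p) (fun p _ m ↦ quadChar_mul d₁ p m)
    (hasBoundedSums_quadChar hd₁)
  have herr := (hasBoundedSums_quadChar_mul hd₁ hdd hperiodic hsq).abs_partialSum_convolution_sub_le
    (hasBoundedSums_quadChar_mul hd₁ hdd (periodic_quadChar d) (abs_quadChar_le_one d)) hM hM
    (hmul hsq) (hmul (abs_quadChar_le_one d)) hβ hY
  rw [hc, hL, mul_zero, zero_mul, sub_zero, mul_comm (quadChar d₁), mul_comm (quadChar d₁),
    ← convolution_mul_of_map_mul (quadChar_mul d₁), mul_comm (_ ⍟ _)] at herr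
  refine (le_abs_self _).trans (herr.trans_eq ?_)
  push_cast
  ring

theorem SparseNorms.coprime (h : SparseNorms n e d) (hd₁ : d₁ ≠ 0) (hn : 2 * d₁ ^ 2 + 2 < n) :
    d₁.Coprime d := by
  refine Nat.coprime_of_dvd fun p hp hpd₁ hpd ↦ ?_
  have hpow := Nat.pow_le_pow_left (Nat.le_of_dvd (Nat.pos_of_ne_zero hd₁) hpd₁) 2
  have := h.le_of_prime_dvd p hp hpd
  lia

/-- A negative value of `L(s, χ_{d₁})` at `199 / 200` forces a real zero `β` in `[199 / 200, 2]`.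
For large `n` the Dirichlet series of `χ_{d₁} · idealCount d` would then both vanish up to a small
error at `β` and be at least about `1` there. -/
theorem eventually_not_sparseNorms (hd₁ : d₁ % 8 = 5)
    (hL : dirichletValue (quadChar d₁) (199 / 200) < 0) :
    ∀ᶠ n in atTop, ∀ e d, ¬SparseNorms n e d := by
  obtain ⟨β, ⟨hβ, -⟩, hz⟩ := intermediate_value_Icc (by norm_num)
    (((hasBoundedSums_quadChar hd₁).continuousOn_dirichletValue (by norm_num)).mono
      Set.Icc_subset_Ici_self) ⟨hL.le, dirichletValue_quadChar_two_nonneg hd₁⟩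
  obtain ⟨C, -, hC⟩ := exists_sum_not_isSquare_idealCount_le
  filter_upwards [eventually_mul_rpow_neg_lt (C + 12 * d₁ ^ 2 * 4) one_pos,
    eventually_gt_atTop (2 * d₁ ^ 2 + 2)] with n hn hn₁ e d h
  have hd : d ≠ 0 := by have := h.disc_mod_eight; lia
  have hY : n ^ 6 ≠ 0 := pow_ne_zero 6 (by lia)
  have hlower := one_sub_sum_le_partialSum_quadChar_mul_idealCount d₁ d β (mul_ne_zero hY hY)
  have hupper := partialSum_quadChar_mul_idealCount_le hd₁ hd (h.coprime (by lia) hn₁)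
    (by linarith) hz hY
  have herr := mul_le_mul_of_nonneg_left (h.disc_sq_mul_le hβ)
    (by positivity : (0 : ℝ) ≤ 12 * d₁ ^ 2)
  linarith [hC n e d h β hβ]

theorem eventually_forall_not_sparseNorms : ∀ᶠ n in atTop, ∀ e d, ¬SparseNorms n e d := by
  obtain ⟨N, hN⟩ := eventually_atTop.1 eventually_dirichletValue_quadChar_neg
  by_cases h : ∃ n e d, N ≤ n ∧ SparseNorms n e d
  · obtain ⟨n, e, d, hn, hs⟩ := h
    exact eventually_not_sparseNorms hs.disc_mod_eight (hN n hn e d hs)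
  · push Not at h
    filter_upwards [eventually_ge_atTop N] with n hn e d using h n e d hn

end Repulsion

/-- There are only finitely many unit-generated real quadratic orders (the orders
`O_{n²-4}` for `n ≥ 3` and `O_{n²+4}` for `n ≥ 1`) having class number one. -/
theorem finite_unitGenerated_classNumber_one :
    ({n : ℤ | 3 ≤ n ∧ classNumber (n ^ 2 - 4) = 1} ∪
      {n : ℤ | 1 ≤ n ∧ classNumber (n ^ 2 + 4) = 1}).Finite := by
  obtain ⟨N, hN⟩ := Filter.eventually_atTop.1 eventually_forall_not_sparseNorms
  have bounded {n : ℤ} (hn : 1 ≤ n) (e : ℤˣ) (h : classNumber (n ^ 2 - 4 * e) = 1) :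
      n ∈ Set.Icc (0 : ℤ) (N + 19) := by
    lift n to ℕ using by lia
    refine ⟨n.cast_nonneg, ?_⟩
    by_contra hlarge
    obtain ⟨d, hd⟩ := exists_sparseNorms_of_classNumber_eq_one (n := n) (by lia) h
    exact hN n (by lia) e d hd
  refine (Set.finite_Icc (0 : ℤ) (N + 19)).subset ?_
  rintro n (⟨hn, h⟩ | ⟨hn, h⟩)
  · exact bounded (by lia) 1 (by simpa using h)
  · exact bounded hn (-1) (by simpa using h)
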